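/- arXiv:2601.01203 — 4 statements merged into one kernel-verified Lean document; each statement's English description precedes it below -/
import Mathlib

section
/- Let (θ_i)_{i=1}^N be the solution of the prototypical Winfree model. Suppose T > 0, 0 < ρ ≤ 2, and B ⊆ {1,…,N} satisfy R(t) ≥ ρ for all t ∈ [0,T) and κ > ‖Ω_B‖_∞/ρ. Let i ∈ B be such that cos θ_i^0 > −√(1 − ‖Ω_B‖_∞²/(κ²ρ²)). Then: (a) if cos θ_i^0 ≤ √(1 − ‖Ω_B‖_∞²/(κ²ρ²)), then cos θ_i(t) ≥ cos θ_i^0 for all t ∈ [0,T); (b) if cos θ_i^0 > √(1 − ‖Ω_B‖_∞²/(κ²ρ²)), then cos θ_i(t) ≥ √(1 − ‖Ω_B‖_∞²/(κ²ρ²)) for all t ∈ [0,T); (c) 1 + cos θ_i(t) ≥ (1/2)(1 + √(1 − ‖Ω_B‖_∞²/(κ²ρ²)))(1 + cos θ_i^0) for all t ∈ [0,T); (d) for any α with 0 < α < √(1 − ‖Ω_B‖_∞²/(κ²ρ²)), if cos θ_i^0 ≥ −α then cos θ_i(t) ≥ −α for all t ∈ [0,T); (e) for any α with 0 < α < √(1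 − ‖Ω_B‖_∞²/(κ²ρ²)), if T > π/(κρ√(1−α²) − ‖Ω_B‖_∞) and cos θ_i^0 ≥ −α, then cos θ_i(t) ≥ α for all t ∈ [π/(κρ√(1−α²) − ‖Ω_B‖_∞), T). -/
/-!
The proof is a barrier argument for `c = cos θᵢ`. Put `K = κρ`, `Ω = ‖Ω_B‖_∞ < K` and
`s = √(1 - Ω²/K²)`. While the order parameter stays above `ρ`,
`c' = κ R sin² θᵢ - ωᵢ sin θᵢ ≥ |sin θᵢ| (K |sin θᵢ| - Ω)` (`winfree_cos_deriv_bound`), and the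
right-hand side is positive as long as `|c| < s`, because then `|sin θᵢ| > Ω/K`. Hence every level
`l ∈ (-s, s)` can be crossed only upwards (`winfree_level`), and letting `l` increase to
`min (c 0) s` gives `min (c 0) s ≤ c t` (`winfree_min_le`), which contains the first four claims.

For the entrance time, as long as `|c| ≤ α < s` the angle `arccos c ∈ [0, π]` decreases at speed
at least `D = K √(1 - α²) - Ω > 0`, since `|sin θᵢ| ≥ √(1 - α²)`. Starting from at most
`arccos (-α) < π`, it would be negative at time `π / D` (`winfree_entrance`); so `c` must reach the
level `α` earlier, and it stays above it afterwards because `α` is a barrier.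
-/


open MeasureTheory Filter

/-- The order parameter `R(t) = (1/N) ∑ⱼ (1 + cos θⱼ(t))` of the prototypical Winfree model. -/
noncomputable def orderParam (N : ℕ) (θ : Fin N → ℝ → ℝ) (t : ℝ) : ℝ :=
  (N : ℝ)⁻¹ * ∑ j, (1 + Real.cos (θ j t))

/-- `θ` is the solution of the prototypical Winfree model with frequencies `ω`,
coupling strength `κ` and initial data `θ0`. -/
def IsWinfreeSol (N : ℕ) (ω : Fin N → ℝ) (κ : ℝ) (θ0 : Fin N → ℝ)
    (θ : Fin N → ℝ → ℝ) : Prop :=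
  (∀ i, θ i 0 = θ0 i) ∧
  ∀ i, ∀ t : ℝ, 0 ≤ t →
    HasDerivAt (θ i)
      (ω i - κ / (N : ℝ) * (∑ j, (1 + Real.cos (θ j t))) * Real.sin (θ i t)) t

/-- `sup_{t ≥ 0} f(t) - inf_{t ≥ 0} f(t) < 2π` (in particular `f` is bounded on `[0,∞)`). -/
def OscLt2Pi (f : ℝ → ℝ) : Prop :=
  BddAbove (f '' Set.Ici 0) ∧ BddBelow (f '' Set.Ici 0) ∧
    sSup (f '' Set.Ici 0) - sInf (f '' Set.Ici 0) < 2 * Real.pi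

/-- A level `l` at which the derivative is always positive cannot be crossed downwards. -/
lemma level_le_of_deriv_pos {c c' : ℝ → ℝ} {a b l : ℝ} (hab : a ≤ b)
    (hc : ∀ t ∈ Set.Icc a b, HasDerivAt c (c' t) t)
    (hl : ∀ t ∈ Set.Icc a b, c t = l → 0 < c' t) (ha : l ≤ c a) : l ≤ c b := by
  have h := image_le_of_deriv_right_lt_deriv_boundary (f := fun t => -c t) (f' := fun t => -c' t)
    (a := a) (b := b) (B := fun _ => -l) (B' := fun _ => 0)
    (fun t ht => (hc t ht).neg.continuousAt.continuousWithinAt)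
    (fun t ht => (hc t ⟨ht.1, ht.2.le⟩).neg.hasDerivWithinAt)
    (by simpa using ha) (fun t => hasDerivAt_const t _)
    (fun t ht h => by
      have := hl t ⟨ht.1, ht.2.le⟩ (by simpa using h)
      simpa using this)
  have := h (Set.right_mem_Icc.2 hab)
  simpa using this

/-- The differential inequality for `cos θᵢ`, in terms of the velocity `w - q sin x` of the
phase `x`. -/
lemma winfree_cos_deriv_bound {x w q K Ω : ℝ} (hw : |w| ≤ Ω) (hq : K ≤ q) :
    |Real.sin x| * (K * |Real.sin x| - Ω) ≤ -Real.sin x * (w - q * Real.sin x) := by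
  have h1 : Real.sin x * w ≤ |Real.sin x| * Ω :=
    (le_abs_self _).trans (by rw [abs_mul]; gcongr)
  have h2 : K * Real.sin x ^ 2 ≤ q * Real.sin x ^ 2 := by gcongr
  have h3 := sq_abs (Real.sin x)
  calc |Real.sin x| * (K * |Real.sin x| - Ω) = K * Real.sin x ^ 2 - |Real.sin x| * Ω := by
        rw [← h3]; ring
    _ ≤ q * Real.sin x ^ 2 - Real.sin x * w := by linarith
    _ = -Real.sin x * (w - q * Real.sin x) := by ring

/-- If `|y| < √(1 - Ω²/K²)`, the angle with cosine `y` has sine larger than `Ω/K` in modulus. -/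
lemma lt_mul_sqrt_of_abs_lt {y K Ω : ℝ} (hK : 0 < K)
    (hy : |y| < Real.sqrt (1 - Ω ^ 2 / K ^ 2)) : Ω < K * Real.sqrt (1 - y ^ 2) := by
  have h1 : y ^ 2 < 1 - Ω ^ 2 / K ^ 2 := by
    rw [← sq_abs]; exact (Real.lt_sqrt (abs_nonneg y)).1 hy
  have h2 : (Ω / K) ^ 2 < 1 - y ^ 2 := by rw [div_pow]; linarith
  have h3 := Real.lt_sqrt_of_sq_lt h2
  rwa [div_lt_iff₀' hK] at h3

section Scalar

variable {c c' : ℝ → ℝ} {T K Ω : ℝ}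

/-- Every level strictly between `-√(1 - Ω²/K²)` and `√(1 - Ω²/K²)` is a barrier from below for
a function satisfying the differential inequality of `cos θᵢ`. -/
lemma winfree_level (hK : 0 < K) (hΩ : 0 ≤ Ω)
    (hc : ∀ t, 0 ≤ t → t < T → HasDerivAt c (c' t) t)
    (hc' : ∀ t, 0 ≤ t → t < T →
      Real.sqrt (1 - c t ^ 2) * (K * Real.sqrt (1 - c t ^ 2) - Ω) ≤ c' t)
    {l : ℝ} (hl : |l| < Real.sqrt (1 - Ω ^ 2 / K ^ 2))
    {a b : ℝ} (ha : 0 ≤ a) (hab : a ≤ b) (hb : b < T) (h : l ≤ c a) : l ≤ c b := by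
  refine level_le_of_deriv_pos hab (fun t ht => hc t (ha.trans ht.1) (ht.2.trans_lt hb))
    (fun t ht htl => ?_) h
  refine lt_of_lt_of_le ?_ (hc' t (ha.trans ht.1) (ht.2.trans_lt hb))
  rw [htl]
  have h1 := lt_mul_sqrt_of_abs_lt hK hl
  exact mul_pos (pos_of_mul_pos_right (hΩ.trans_lt h1) hK.le) (by linarith)

lemma winfree_min_le (hK : 0 < K) (hΩ : 0 ≤ Ω)
    (hc : ∀ t, 0 ≤ t → t < T → HasDerivAt c (c' t) t)
    (hc' : ∀ t, 0 ≤ t → t < T →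
      Real.sqrt (1 - c t ^ 2) * (K * Real.sqrt (1 - c t ^ 2) - Ω) ≤ c' t)
    (hs : 0 < Real.sqrt (1 - Ω ^ 2 / K ^ 2))
    (h0 : -Real.sqrt (1 - Ω ^ 2 / K ^ 2) < c 0) {t : ℝ} (ht : 0 ≤ t) (htT : t < T) :
    min (c 0) (Real.sqrt (1 - Ω ^ 2 / K ^ 2)) ≤ c t := by
  set s := Real.sqrt (1 - Ω ^ 2 / K ^ 2) with hsdef
  -- The value `s` itself need not be a strict barrier, so approach the minimum from below.
  refine le_of_forall_lt_imp_le_of_dense fun l hl => ?_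
  have hm : -s < min (c 0) s := lt_min h0 (by linarith)
  obtain ⟨l', h1, h2⟩ := exists_between (max_lt hl hm)
  have h3 := lt_min_iff.1 h2
  have h4 := max_lt_iff.1 h1
  exact h4.1.le.trans
    (winfree_level hK hΩ hc hc' (abs_lt.2 ⟨h4.2, h3.2⟩) le_rfl ht htT h3.1.le)

/-- Started above `-α`, the function lies above `α` from time `π / (K √(1 - α²) - Ω)` on: the level
`α` is a barrier, so otherwise `-α ≤ c < α` on all of `[0, t]`, and there `arccos c` decreases at
speed at least `K √(1 - α²) - Ω`, too fast to remain nonnegative. -/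
lemma winfree_entrance (hK : 0 < K) (hΩ : 0 ≤ Ω)
    (hc : ∀ t, 0 ≤ t → t < T → HasDerivAt c (c' t) t)
    (hc' : ∀ t, 0 ≤ t → t < T →
      Real.sqrt (1 - c t ^ 2) * (K * Real.sqrt (1 - c t ^ 2) - Ω) ≤ c' t)
    {α : ℝ} (hα0 : 0 < α) (hα : α < Real.sqrt (1 - Ω ^ 2 / K ^ 2)) (h0 : -α ≤ c 0) {t : ℝ}
    (ht : Real.pi / (K * Real.sqrt (1 - α ^ 2) - Ω) ≤ t) (htT : t < T) : α ≤ c t := by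
  have hαabs : |α| < Real.sqrt (1 - Ω ^ 2 / K ^ 2) := by rwa [abs_of_pos hα0]
  have hα1 : α < 1 := hα.trans_le (Real.sqrt_le_one.2 (by
    have : 0 ≤ Ω ^ 2 / K ^ 2 := by positivity
    linarith))
  have hD : 0 < K * Real.sqrt (1 - α ^ 2) - Ω := sub_pos.2 (lt_mul_sqrt_of_abs_lt hK hαabs)
  set D := K * Real.sqrt (1 - α ^ 2) - Ω with hDdef
  have ht0 : 0 ≤ t := le_trans (by positivity) ht
  by_contra! hlt
  have hup : ∀ u ∈ Set.Icc 0 t, c u < α := by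
    intro u hu
    by_contra! hu'
    exact absurd (winfree_level hK hΩ hc hc' hαabs hu.1 hu.2 htT hu') (not_le.2 hlt)
  have hlow : ∀ u ∈ Set.Icc 0 t, -α ≤ c u := fun u hu =>
    winfree_level hK hΩ hc hc' (by rwa [abs_neg]) le_rfl hu.1 (hu.2.trans_lt htT) h0
  have hder : ∀ u ∈ Set.Icc 0 t, HasDerivAt (fun u => Real.arccos (c u) + D * u)
      (-(1 / Real.sqrt (1 - c u ^ 2)) * c' u + D) u := by
    intro u hu
    have h1 := hup u hu
    have h2 := hlow u hu
    have h3 := (Real.hasDerivAt_arccos (x := c u) (by linarith) (by linarith)).comp u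
      (hc u hu.1 (hu.2.trans_lt htT))
    exact h3.add (by simpa using (hasDerivAt_id u).const_mul D)
  have hanti : AntitoneOn (fun u => Real.arccos (c u) + D * u) (Set.Icc 0 t) := by
    refine antitoneOn_of_deriv_nonpos (convex_Icc 0 t)
      (fun u hu => (hder u hu).continuousAt.continuousWithinAt)
      (fun u hu => (hder u (interior_subset hu)).differentiableAt.differentiableWithinAt)
      (fun u hu => ?_)
    have hu := interior_subset hu
    rw [(hder u hu).deriv]
    have h1 := hup u hu
    have h2 := hlow u hu
    have hsq : c u ^ 2 ≤ α ^ 2 := sq_le_sq' h2 h1.le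
    have hS : Real.sqrt (1 - α ^ 2) ≤ Real.sqrt (1 - c u ^ 2) := Real.sqrt_le_sqrt (by linarith)
    have hSpos : 0 < Real.sqrt (1 - c u ^ 2) := Real.sqrt_pos.2 (by nlinarith)
    have h4 : Real.sqrt (1 - c u ^ 2) * D ≤ c' u := by
      refine le_trans ?_ (hc' u hu.1 (hu.2.trans_lt htT))
      rw [hDdef]; gcongr
    have h5 : D ≤ 1 / Real.sqrt (1 - c u ^ 2) * c' u := by
      rw [one_div, ← div_eq_inv_mul, le_div_iff₀ hSpos]; linarith
    linarith
  have h1 := hanti (Set.left_mem_Icc.2 ht0) (Set.right_mem_Icc.2 ht0) ht0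
  have h2 : Real.arccos (c 0) ≤ Real.arccos (-α) := Real.arccos_le_arccos h0
  have h3 : 0 < Real.arccos α := Real.arccos_pos.2 hα1
  have h4 := Real.arccos_neg α
  have h5 := Real.arccos_nonneg (c t)
  have h6 : Real.pi ≤ D * t := by rwa [div_le_iff₀' hD] at ht
  simp only [mul_zero, add_zero] at h1
  linarith

end Scalar

theorem stmt8 (N : ℕ) (hN : 1 ≤ N) (ω : Fin N → ℝ) (κ : ℝ)
    (θ0 : Fin N → ℝ) (θ : Fin N → ℝ → ℝ) (hsol : IsWinfreeSol N ω κ θ0 θ)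
    (B : Finset (Fin N))
    (ΩB : ℝ) (hΩB : IsGreatest ((fun i => |ω i|) '' (B : Set (Fin N))) ΩB)
    (T : ℝ) (hT : 0 < T)
    (ρ : ℝ) (hρ0 : 0 < ρ) (hρ2 : ρ ≤ 2)
    (hR : ∀ t : ℝ, 0 ≤ t → t < T → ρ ≤ orderParam N θ t)
    (hκ : ΩB / ρ < κ)
    (i : Fin N) (hi : i ∈ B)
    (hinit : -Real.sqrt (1 - ΩB^2 / (κ^2 * ρ^2)) < Real.cos (θ0 i)) :
    -- (a)
    (Real.cos (θ0 i) ≤ Real.sqrt (1 - ΩB^2 / (κ^2 * ρ^2)) →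
      ∀ t : ℝ, 0 ≤ t → t < T → Real.cos (θ0 i) ≤ Real.cos (θ i t)) ∧
    -- (b)
    (Real.sqrt (1 - ΩB^2 / (κ^2 * ρ^2)) < Real.cos (θ0 i) →
      ∀ t : ℝ, 0 ≤ t → t < T →
        Real.sqrt (1 - ΩB^2 / (κ^2 * ρ^2)) ≤ Real.cos (θ i t)) ∧
    -- (c)
    (∀ t : ℝ, 0 ≤ t → t < T →
      1/2 * (1 + Real.sqrt (1 - ΩB^2 / (κ^2 * ρ^2))) * (1 + Real.cos (θ0 i)) ≤
        1 + Real.cos (θ i t)) ∧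
    -- (d)
    (∀ α : ℝ, 0 < α → α < Real.sqrt (1 - ΩB^2 / (κ^2 * ρ^2)) →
      -α ≤ Real.cos (θ0 i) →
      ∀ t : ℝ, 0 ≤ t → t < T → -α ≤ Real.cos (θ i t)) ∧
    -- (e)
    (∀ α : ℝ, 0 < α → α < Real.sqrt (1 - ΩB^2 / (κ^2 * ρ^2)) →
      Real.pi / (κ * ρ * Real.sqrt (1 - α^2) - ΩB) < T →
      -α ≤ Real.cos (θ0 i) →
      ∀ t : ℝ, Real.pi / (κ * ρ * Real.sqrt (1 - α^2) - ΩB) ≤ t → t < T →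
        α ≤ Real.cos (θ i t)) := by
  have hΩ0 : 0 ≤ ΩB := (abs_nonneg (ω i)).trans (hΩB.2 ⟨i, hi, rfl⟩)
  have hωi : |ω i| ≤ ΩB := hΩB.2 ⟨i, hi, rfl⟩
  have hκ0 : 0 < κ := lt_of_le_of_lt (by positivity) hκ
  have hK : 0 < κ * ρ := mul_pos hκ0 hρ0
  have hΩK : ΩB < κ * ρ := by rwa [div_lt_iff₀ hρ0] at hκ
  rw [← mul_pow] at hinit ⊢
  have hs : 0 < Real.sqrt (1 - ΩB ^ 2 / (κ * ρ) ^ 2) := by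
    rw [Real.sqrt_pos, sub_pos, div_lt_one (by positivity)]
    gcongr
  have hs1 : Real.sqrt (1 - ΩB ^ 2 / (κ * ρ) ^ 2) ≤ 1 := Real.sqrt_le_one.2 (by
    have : 0 ≤ ΩB ^ 2 / (κ * ρ) ^ 2 := by positivity
    linarith)
  have hc : ∀ t, 0 ≤ t → t < T → HasDerivAt (fun t => Real.cos (θ i t))
      (-Real.sin (θ i t) * (ω i - κ * orderParam N θ t * Real.sin (θ i t))) t := by
    intro t ht _
    convert (hsol.2 i t ht).cos using 3
    unfold orderParam
    ring
  have hc' : ∀ t, 0 ≤ t → t < T →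
      Real.sqrt (1 - Real.cos (θ i t) ^ 2) *
        (κ * ρ * Real.sqrt (1 - Real.cos (θ i t) ^ 2) - ΩB) ≤
      -Real.sin (θ i t) * (ω i - κ * orderParam N θ t * Real.sin (θ i t)) := by
    intro t ht htT
    rw [← Real.abs_sin_eq_sqrt_one_sub_cos_sq]
    exact winfree_cos_deriv_bound hωi (by gcongr; exact hR t ht htT)
  rw [← hsol.1 i] at hinit ⊢
  have hmin : ∀ t, 0 ≤ t → t < T →
      min (Real.cos (θ i 0)) (Real.sqrt (1 - ΩB ^ 2 / (κ * ρ) ^ 2)) ≤ Real.cos (θ i t) :=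
    fun t ht htT => winfree_min_le hK hΩ0 hc hc' hs hinit ht htT
  refine ⟨fun h t ht htT => ?_, fun h t ht htT => ?_, fun t ht htT => ?_,
    fun α hα0 hα h t ht htT => ?_, fun α hα0 hα _ h t ht htT =>
      winfree_entrance hK hΩ0 hc hc' hα0 hα h ht htT⟩
  · simpa [h] using hmin t ht htT
  · simpa [h.le] using hmin t ht htT
  · have h1 := hmin t ht htT
    have h2 := Real.neg_one_le_cos (θ i 0)
    have h3 := Real.cos_le_one (θ i 0)
    rcases min_le_iff.1 h1 with h | h <;> nlinarith
  · exact (le_min h (by linarith)).trans (hmin t ht htT)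
end

section
/- Assume the interaction functions I and S satisfy the structural conditions (C1), (C2), (C3). Let (θ_i)_{i=1}^N be the solution of the Winfree model. Suppose T > 0, 0 < ρ ≤ sup_{θ∈ℝ}|I(θ)|, and B ⊆ {1,…,N} satisfy R(t) ≥ ρ for all t ∈ [0,T) and κ > ‖Ω_B‖_∞/(ρ c_1 (π−α_0)^p). Let i ∈ B be such that θ_i^0 ∈ [−π + (‖Ω_B‖_∞/(κρc_1))^{1/p}, π − (‖Ω_B‖_∞/(κρc_1))^{1/p}]. Then |θ_i(t)| ≤ max{|θ_i^0|, α_0} and I(θ_i(t)) ≥ c_3 I(θ_i^0) for all t ∈ [0,T). -/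
/-!
The barrier angle `M = max |θᵢ⁰| α₀` satisfies `α₀ ≤ M ≤ π - δ` with
`δ = (‖Ω_B‖_∞ / (κ ρ c₁))^(1/p)`: the bound `|θᵢ⁰| ≤ π - δ` is the assumption on the initial datum,
and `α₀ < π - δ` is the assumption on `κ`. By (C1), `S M ≤ -c₁ δ^p` and `S (-M) ≥ c₁ δ^p`, so as
long as the average influence is at least `ρ`, the velocity field of `θᵢ` points (weakly) into
`[-M, M]` at both endpoints.

When `M = π - δ` the field may vanish at the endpoints and point outwards just beyond them, so a sign
argument alone is not enough. Instead, the field is Lipschitz in the phase (`S` is Lipschitz and the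
average influence is bounded), so the excess `u` of `±θᵢ` over `M` satisfies `u' ≤ L u` wherever
`u > 0`, and Grönwall's argument (`nonpos_of_deriv_le_mul`) gives `u ≤ 0`. The bound on `I (θᵢ t)` is
then (C3).
-/

open MeasureTheory Filter

/-- The average influence `R(t) = (1/N) ∑ⱼ I(θⱼ(t))` of the Winfree model. -/
noncomputable def avgInfl (N : ℕ) (I : ℝ → ℝ) (θ : Fin N → ℝ → ℝ) (t : ℝ) : ℝ :=
  (N : ℝ)⁻¹ * ∑ j, I (θ j t)

/-- `θ` is the solution of the Winfree model with influence function `I`, sensitivity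
function `S`, frequencies `ω`, coupling strength `κ` and initial data `θ0`. -/
def IsGenWinfreeSol (N : ℕ) (ω : Fin N → ℝ) (κ : ℝ) (I S : ℝ → ℝ)
    (θ0 : Fin N → ℝ) (θ : Fin N → ℝ → ℝ) : Prop :=
  (∀ i, θ i 0 = θ0 i) ∧
  ∀ i, ∀ t : ℝ, 0 ≤ t →
    HasDerivAt (θ i) (ω i + κ / (N : ℝ) * S (θ i t) * ∑ j, I (θ j t)) t

/-- `I` and `S` are `2π`-periodic Lipschitz functions. -/
def GoodIS (I S : ℝ → ℝ) : Prop :=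
  Function.Periodic I (2 * Real.pi) ∧ Function.Periodic S (2 * Real.pi) ∧
  (∃ K : NNReal, LipschitzWith K I) ∧ (∃ K : NNReal, LipschitzWith K S)

/-- The structural conditions (C1), (C2), (C3) on the interaction functions,
with angle `α₀ ∈ (0,π)`, exponents `p, q ≥ 1` and constants `c₁, c₂ > 0`, `c₃ ∈ (0,1]`. -/
def StructC (I S : ℝ → ℝ) (α₀ p q c₁ c₂ c₃ : ℝ) : Prop :=
  α₀ ∈ Set.Ioo 0 Real.pi ∧ 1 ≤ p ∧ 1 ≤ q ∧ 0 < c₁ ∧ 0 < c₂ ∧ c₃ ∈ Set.Ioc (0:ℝ) 1 ∧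
  (∀ x ∈ Set.Icc α₀ Real.pi, S x ≤ -c₁ * (Real.pi - x) ^ p) ∧
  (∀ x ∈ Set.Icc (-Real.pi) (-α₀), c₁ * (x + Real.pi) ^ p ≤ S x) ∧
  (∀ x ∈ Set.Icc (-Real.pi) Real.pi, 0 ≤ I x ∧ I x ≤ c₂ * (Real.pi - |x|) ^ q) ∧
  (∀ x ∈ Set.Icc (-Real.pi) Real.pi, ∀ φ : ℝ, |φ| ≤ max |x| α₀ → c₃ * I x ≤ I φ)

/-- One-sided Grönwall argument: the differential inequality is only needed where `u` is
positive. -/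
lemma nonpos_of_deriv_le_mul {u u' : ℝ → ℝ} {L T : ℝ}
    (hu : ∀ t, 0 ≤ t → t < T → HasDerivAt u (u' t) t) (h0 : u 0 ≤ 0)
    (h : ∀ t, 0 ≤ t → t < T → 0 < u t → u' t ≤ L * u t) :
    ∀ t, 0 ≤ t → t < T → u t ≤ 0 := by
  intro t ht htT
  -- `ε e^{(L+1)s}` grows strictly faster than `u` wherever the two meet.
  have key : ∀ ε : ℝ, 0 < ε → u t ≤ ε * Real.exp ((L + 1) * t) := by
    intro ε hε
    have hB : ∀ x, HasDerivAt (fun s => ε * Real.exp ((L + 1) * s))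
        (ε * (Real.exp ((L + 1) * x) * (L + 1))) x := by
      intro x
      have h1 : HasDerivAt (fun s : ℝ => (L + 1) * s) (L + 1) x := by
        simpa using (hasDerivAt_id x).const_mul (L + 1)
      exact (h1.exp).const_mul ε
    refine image_le_of_deriv_right_lt_deriv_boundary (a := 0) (b := t) (f := u) (f' := u')
      (B := fun s => ε * Real.exp ((L + 1) * s)) ?_ ?_ ?_ hB ?_ ⟨ht, le_rfl⟩
    · intro x hx
      exact (hu x hx.1 (lt_of_le_of_lt hx.2 htT)).continuousAt.continuousWithinAt
    · intro x hx
      exact (hu x hx.1 (hx.2.trans htT)).hasDerivWithinAt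
    · simp
      linarith
    · intro x hx hux
      have hpos : 0 < ε * Real.exp ((L + 1) * x) := by positivity
      have := h x hx.1 (hx.2.trans htT) (by rw [hux]; exact hpos)
      rw [hux] at this
      linarith
  by_contra! hpos
  have hE := Real.exp_pos ((L + 1) * t)
  have := key (u t / 2 / Real.exp ((L + 1) * t)) (by positivity)
  rw [div_mul_cancel₀ _ hE.ne'] at this
  linarith

theorem stmt9 (N : ℕ) (hN : 1 ≤ N) (ω : Fin N → ℝ) (κ : ℝ) (I S : ℝ → ℝ)
    (α₀ p q c₁ c₂ c₃ : ℝ)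
    (hGood : GoodIS I S) (hStruct : StructC I S α₀ p q c₁ c₂ c₃)
    (θ0 : Fin N → ℝ) (θ : Fin N → ℝ → ℝ) (hsol : IsGenWinfreeSol N ω κ I S θ0 θ)
    (B : Finset (Fin N))
    (ΩB : ℝ) (hΩB : IsGreatest ((fun i => |ω i|) '' (B : Set (Fin N))) ΩB)
    (Isup : ℝ) (hIsup : IsLUB (Set.range fun x => |I x|) Isup)
    (T : ℝ) (hT : 0 < T)
    (ρ : ℝ) (hρ0 : 0 < ρ) (hρI : ρ ≤ Isup)
    (hR : ∀ t : ℝ, 0 ≤ t → t < T → ρ ≤ avgInfl N I θ t)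
    (hκ : ΩB / (ρ * c₁ * (Real.pi - α₀) ^ p) < κ)
    (i : Fin N) (hi : i ∈ B)
    (hinit : θ0 i ∈
      Set.Icc (-Real.pi + (ΩB / (κ * ρ * c₁)) ^ (1/p))
        (Real.pi - (ΩB / (κ * ρ * c₁)) ^ (1/p))) :
    ∀ t : ℝ, 0 ≤ t → t < T →
      |θ i t| ≤ max |θ0 i| α₀ ∧ c₃ * I (θ0 i) ≤ I (θ i t) := by
  obtain ⟨hα, hp, -, hc₁, -, -, hSr, hSl, -, hI3⟩ := hStruct
  obtain ⟨-, -, -, K, hK⟩ := hGood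
  obtain ⟨h0, hder⟩ := hsol
  have hωB : |ω i| ≤ ΩB := hΩB.2 ⟨i, hi, rfl⟩
  have hΩ0 : 0 ≤ ΩB := (abs_nonneg _).trans hωB
  have hp0 : 0 < p := by linarith
  have hπα : 0 < Real.pi - α₀ := by linarith [hα.2]
  have hπp : 0 < (Real.pi - α₀) ^ p := Real.rpow_pos_of_pos hπα p
  have hκ0 : 0 < κ := lt_of_le_of_lt (by positivity) hκ
  have hq0 : 0 ≤ ΩB / (κ * ρ * c₁) := by positivity
  set δ := (ΩB / (κ * ρ * c₁)) ^ (1 / p) with hδ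
  have hδ0 : 0 ≤ δ := Real.rpow_nonneg hq0 _
  have hδp : δ ^ p = ΩB / (κ * ρ * c₁) := by
    rw [hδ, ← Real.rpow_mul hq0, one_div_mul_cancel hp0.ne', Real.rpow_one]
  have hδα : δ < Real.pi - α₀ := by
    rw [← Real.rpow_lt_rpow_iff hδ0 hπα.le hp0, hδp, div_lt_iff₀ (by positivity)]
    rw [div_lt_iff₀ (by positivity)] at hκ
    linarith
  set M := max |θ0 i| α₀ with hM
  have hMα : α₀ ≤ M := le_max_right _ _
  have hMπ : M ≤ Real.pi - δ := by
    refine max_le (abs_le.2 ⟨?_, hinit.2⟩) (by linarith)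
    linarith [hinit.1]
  have hθM : |θ0 i| ≤ M := le_max_left _ _
  have hδM : δ ^ p ≤ (Real.pi - M) ^ p := Real.rpow_le_rpow hδ0 (by linarith) hp0.le
  have hc : c₁ * δ ^ p * (κ * ρ) = ΩB := by
    rw [hδp]; field_simp
  have hSM : S M ≤ -(c₁ * δ ^ p) := by
    have := hSr M ⟨hMα, by linarith⟩
    nlinarith
  have hSM' : c₁ * δ ^ p ≤ S (-M) := by
    have := hSl (-M) ⟨by linarith, by linarith⟩
    rw [neg_add_eq_sub] at this
    nlinarith
  have hcδ : 0 ≤ c₁ * δ ^ p := by positivity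
  have hIle : ∀ x, I x ≤ Isup := fun x => (le_abs_self _).trans (hIsup.1 ⟨x, rfl⟩)
  have hRle : ∀ t, avgInfl N I θ t ≤ Isup := by
    intro t
    have hN0 : (0 : ℝ) < N := by exact_mod_cast hN
    unfold avgInfl
    rw [inv_mul_le_iff₀ hN0]
    calc ∑ j, I (θ j t) ≤ ∑ _j : Fin N, Isup := Finset.sum_le_sum fun j _ => hIle _
      _ = N * Isup := by simp
  have hd : ∀ t, 0 ≤ t → HasDerivAt (θ i) (ω i + κ * avgInfl N I θ t * S (θ i t)) t := by
    intro t ht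
    convert hder i t ht using 1
    unfold avgInfl
    ring
  have hLip : ∀ x y, S x - S y ≤ K * |x - y| := fun x y =>
    (le_abs_self _).trans (by simpa [Real.dist_eq] using hK.dist_le_mul x y)
  have hω := abs_le.1 hωB
  have hθ0 := abs_le.1 hθM
  -- `σ` stands for the sensitivity at excess `u` beyond the barrier, with the frequency `w` and the
  -- outward direction as the positive one. The constant `κ * Isup * K` is the Lipschitz bound `L`.
  have hforce : ∀ t, 0 ≤ t → t < T → ∀ w σ u : ℝ, w ≤ ΩB → 0 ≤ u →
      σ ≤ -(c₁ * δ ^ p) + K * u → w + κ * avgInfl N I θ t * σ ≤ κ * Isup * K * u := by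
    intro t ht htT w σ u hw hu hσ
    have hr := hR t ht htT
    have hκr : κ * ρ ≤ κ * avgInfl N I θ t := mul_le_mul_of_nonneg_left hr hκ0.le
    have hκs : κ * avgInfl N I θ t ≤ κ * Isup := mul_le_mul_of_nonneg_left (hRle t) hκ0.le
    have hκr0 : 0 ≤ κ * avgInfl N I θ t := (mul_pos hκ0 hρ0).le.trans hκr
    have h1 := mul_le_mul_of_nonneg_left hσ hκr0
    have h2 := mul_le_mul_of_nonneg_left hκr hcδ
    have h3 := mul_le_mul_of_nonneg_right hκs (mul_nonneg K.coe_nonneg hu)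
    nlinarith
  have hup : ∀ t, 0 ≤ t → t < T → θ i t - M ≤ 0 := by
    refine nonpos_of_deriv_le_mul (L := κ * Isup * K) (fun t ht _ => (hd t ht).sub_const M)
      (by rw [h0]; linarith) ?_
    intro t ht htT hpos
    refine hforce t ht htT _ _ _ hω.2 hpos.le ?_
    have := hLip (θ i t) M
    rw [abs_of_pos hpos] at this
    linarith
  have hlo : ∀ t, 0 ≤ t → t < T → -θ i t - M ≤ 0 := by
    refine nonpos_of_deriv_le_mul (L := κ * Isup * K) (fun t ht _ => ((hd t ht).fun_neg).sub_const M)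
      (by rw [h0]; linarith) ?_
    intro t ht htT hpos
    have := hLip (-M) (θ i t)
    rw [show -M - θ i t = -θ i t - M by ring, abs_of_pos hpos] at this
    have := hforce t ht htT (-ω i) (-S (θ i t)) _ (by linarith) hpos.le (by linarith)
    linarith
  intro t ht htT
  have hbound : |θ i t| ≤ M := abs_le.2 ⟨by linarith [hlo t ht htT], by linarith [hup t ht htT]⟩
  exact ⟨hbound, hI3 (θ0 i) ⟨by linarith, by linarith⟩ _ hbound⟩
end

section
/- Assume the interaction functions I and S satisfy the structural conditions (C1), (C2), (C3). Let μ be a probability measure on [−π,π] with R* := ∫_{−π}^{π} I(θ) dμ(θ) > 0, and suppose κ > max{ (4(4c_2)^{p/q}/(c_1c_3)) · ‖Ω‖_∞/(R*)^{1+p/q}, (4/(c_1c_3(π−α_0)^p)) · ‖Ω‖_∞/R* }. Then the μ^{⊗N}-measure of the set of initial data (θ_1^0,…,θ_N^0) ∈ [−π,π]^N whose solution of the Winfree model satisfies R(t) > c_3R*/4 for all t ≥ 0 and sup_{t≥0} θ_i(t) − inf_{t≥0} θ_i(t) < 2π for all i = 1,…,N is at least 1 − exp(−(R*)²N/(2·(sup_{θ∈ℝ}|I(θ)|)²)),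 where μ^{⊗N} is the N-fold product measure on [−π,π]^N. -/
/-!
The proof combines a concentration estimate with a deterministic bootstrap.

Concentration: `0 ≤ I ≤ sup|I|`, and `R₀` is an average of `N` independent copies of a variable with
mean `R*`, so by Hoeffding `R₀ ≤ R*/2` has probability at most `exp(-(R*)²N/(2 sup|I|²))`
(`hoeffding_influence`). It remains to treat data in `[-π,π]^N` with `R₀ > R*/2`
(`good_of_influence`).

Bootstrap: put `δ = min ((R*/(4c₂))^{1/q}) (π - α₀)` and `α = π - δ`. By (C2), oscillators with
`|θ⁰| > α` have `I(θ⁰) ≤ R*/4`, so those with `|θ⁰| ≤ α` carry an average influence above `R*/4`.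
As long as `R > c₃R*/4`, the bound on `κ` and (C1) make the velocity at every level
`β ∈ [α₀, α]` negative, and at `-β` positive (`coupling_beats_frequencies`). Hence an oscillator with
`|θ⁰| ≤ α` stays in `|θ| ≤ max |θ⁰| α₀`, and (C3) gives `I(θ) ≥ c₃ I(θ⁰)` along the trajectory;
summing, `R` exceeds `c₃R*/4` strictly, so it can never reach that value (`persistence`).

Oscillation: with `R > c₃R*/4` for all times, all translates by `2π` of `[-α, α]` are traps. An
oscillator starting in a gap between two of them either stays in the gap or falls into one trap
without having touched the other, so its range has length less than `2π` (`confined_of_gap`).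

Existence of the solution for all times holds because the field is bounded and Lipschitz
(`exists_global_solution`).
-/

open MeasureTheory Filter

/-! ### Global solutions for a bounded Lipschitz field -/

/-- A bounded, globally Lipschitz autonomous field has a global solution: Picard–Lindelöf applies
on every `[-(n+1), n+1]` because the ball of radius `M (n+1)` is never left, and the resulting
curves agree on overlaps by uniqueness. -/
theorem exists_global_solution {E : Type*} [NormedAddCommGroup E] [NormedSpace ℝ E]
    [CompleteSpace E] (F : E → E) (K M : NNReal) (hK : LipschitzWith K F)
    (hM : ∀ x, ‖F x‖ ≤ M) (x₀ : E) :
    ∃ x : ℝ → E, x 0 = x₀ ∧ ∀ t, HasDerivAt x (F (x t)) t := by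
  have loc : ∀ n : ℕ, ∃ x : ℝ → E, x 0 = x₀ ∧
      ∀ t ∈ Set.Ioo (-((n : ℝ) + 1)) ((n : ℝ) + 1), HasDerivAt x (F (x t)) t := by
    intro n
    have h0 : (0 : ℝ) ∈ Set.Icc (-((n : ℝ) + 1)) ((n : ℝ) + 1) := by
      constructor <;> linarith [(Nat.cast_nonneg n : (0 : ℝ) ≤ n)]
    have hPL : IsPicardLindelof (fun _ : ℝ => F) (⟨0, h0⟩ : Set.Icc (-((n : ℝ) + 1)) ((n : ℝ) + 1))
        x₀ (M * ((n : NNReal) + 1)) 0 M K := by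
      refine IsPicardLindelof.of_time_independent (fun x _ => hM x) hK.lipschitzOnWith ?_
      simp
    obtain ⟨x, hx0, hx⟩ := hPL.exists_eq_forall_mem_Icc_hasDerivWithinAt₀
    exact ⟨x, hx0, fun t ht =>
      (hx t (Set.Ioo_subset_Icc_self ht)).hasDerivAt (Icc_mem_nhds ht.1 ht.2)⟩
  choose x hx0 hx using loc
  have agree : ∀ m n : ℕ, m ≤ n →
      Set.EqOn (x m) (x n) (Set.Ioo (-((m : ℝ) + 1)) ((m : ℝ) + 1)) := by
    intro m n hmn
    have hmn' : (m : ℝ) ≤ n := by exact_mod_cast hmn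
    have hm0 : (0 : ℝ) ≤ m := Nat.cast_nonneg m
    refine ODE_solution_unique_of_mem_Ioo (v := fun _ => F) (s := fun _ => Set.univ) (t₀ := 0)
      (K := K) (fun _ _ => hK.lipschitzOnWith) ?_ (fun t ht => ⟨hx m t ht, trivial⟩)
      (fun t ht => ⟨hx n t ?_, trivial⟩) ?_
    · constructor <;> linarith
    · constructor <;> linarith [ht.1, ht.2]
    · rw [hx0, hx0]
  have agree' : ∀ m n : ℕ, ∀ t : ℝ, |t| < m + 1 → |t| < n + 1 → x m t = x n t := by
    intro m n t hm hn
    rcases le_total m n with h | h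
    · exact agree m n h (abs_lt.1 hm)
    · exact (agree n m h (abs_lt.1 hn)).symm
  have hceil : ∀ t : ℝ, |t| < (⌈|t|⌉₊ : ℝ) + 1 := fun t => by
    linarith [Nat.le_ceil |t|]
  refine ⟨fun t => x ⌈|t|⌉₊ t, by simp [hx0], fun t => ?_⟩
  set m := ⌈|t|⌉₊ with hm
  have ht := hceil t
  rw [← hm] at ht
  have key : (fun s => x ⌈|s|⌉₊ s) =ᶠ[nhds t] x m := by
    filter_upwards [(continuous_abs.tendsto t).eventually (gt_mem_nhds ht)] with s hs
    exact agree' _ _ s (hceil s) hs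
  exact (hx m t (abs_lt.1 ht)).congr_of_eventuallyEq key

theorem exists_winfree_solution (N : ℕ) (ω : Fin N → ℝ) (κ : ℝ) (I S : ℝ → ℝ)
    (hGood : GoodIS I S) (θ0 : Fin N → ℝ) :
    ∃ θ : Fin N → ℝ → ℝ, IsGenWinfreeSol N ω κ I S θ0 θ := by
  obtain ⟨hIp, hSp, ⟨KI, hI⟩, ⟨KS, hS⟩⟩ := hGood
  have bdd : ∀ (f : ℝ → ℝ) (K : NNReal), Function.Periodic f (2 * Real.pi) → LipschitzWith K f →
      ∃ M : NNReal, ∀ x, |f x| ≤ M := by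
    intro f K hp hf
    refine ⟨⟨|f 0| + K * (2 * Real.pi), by positivity⟩, fun x => ?_⟩
    obtain ⟨y, hy, hxy⟩ := hp.exists_mem_Ico (by positivity) x 0
    have h1 := hf.dist_le_mul y 0
    rw [Real.dist_eq, Real.dist_eq, sub_zero, abs_of_nonneg hy.1] at h1
    have h2 : (K : ℝ) * y ≤ K * (2 * Real.pi) := by gcongr; linarith [hy.2]
    have h3 := abs_add_le (f y - f 0) (f 0)
    rw [sub_add_cancel] at h3
    rw [hxy]
    change |f y| ≤ |f 0| + K * (2 * Real.pi)
    linarith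
  obtain ⟨MI, hMI⟩ := bdd I KI hIp hI
  obtain ⟨MS, hMS⟩ := bdd S KS hSp hS
  obtain ⟨W, hW⟩ : ∃ W : NNReal, ∀ i, |ω i| ≤ W :=
    ⟨∑ i, ‖ω i‖₊, fun i => by
      have := Finset.single_le_sum (f := fun i => ‖ω i‖₊) (fun _ _ => zero_le) (Finset.mem_univ i)
      exact_mod_cast this⟩
  let F : (Fin N → ℝ) → (Fin N → ℝ) := fun x i => ω i + κ / (N : ℝ) * S (x i) * ∑ j, I (x j)
  have hsum : ∀ x : Fin N → ℝ, |∑ j, I (x j)| ≤ N * MI := fun x => by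
    refine (Finset.abs_sum_le_sum_abs _ _).trans ?_
    refine (Finset.sum_le_sum fun j _ => hMI (x j)).trans ?_
    simp
  have hsumL : ∀ x y : Fin N → ℝ, |∑ j, I (x j) - ∑ j, I (y j)| ≤ N * (KI * dist x y) := by
    intro x y
    rw [← Finset.sum_sub_distrib]
    refine (Finset.abs_sum_le_sum_abs _ _).trans ?_
    refine (Finset.sum_le_sum (g := fun _ => KI * dist x y) fun j _ => ?_).trans (by simp)
    have := hI.dist_le_mul (x j) (y j)
    rw [Real.dist_eq] at this
    refine this.trans ?_
    gcongr
    exact dist_le_pi_dist x y j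
  set k : NNReal := ‖κ / (N : ℝ)‖₊ with hk
  have hk' : |κ / (N : ℝ)| = k := by rw [hk, coe_nnnorm, Real.norm_eq_abs]
  have hFM : ∀ x, ‖F x‖ ≤ (W + k * MS * (N * MI) : NNReal) := by
    intro x
    rw [pi_norm_le_iff_of_nonneg (by positivity)]
    intro i
    push_cast
    rw [Real.norm_eq_abs]
    refine (abs_add_le _ _).trans (add_le_add (hW i) ?_)
    rw [abs_mul, abs_mul, hk']
    gcongr
    · exact hMS _
    · exact hsum x
  have hFL : LipschitzWith (k * (KS * (N * MI) + MS * (N * KI))) F := by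
    refine LipschitzWith.of_dist_le_mul fun x y => ?_
    rw [dist_pi_le_iff (by positivity)]
    intro i
    rw [Real.dist_eq]
    have e : F x i - F y i = κ / (N : ℝ) * ((S (x i) - S (y i)) * ∑ j, I (x j)
        + S (y i) * (∑ j, I (x j) - ∑ j, I (y j))) := by simp only [F]; ring
    rw [e, abs_mul, hk']
    push_cast
    rw [mul_assoc]
    gcongr
    refine (abs_add_le _ _).trans ?_
    rw [abs_mul, abs_mul]
    have h1 : |S (x i) - S (y i)| ≤ KS * dist x y := by
      have := hS.dist_le_mul (x i) (y i)
      rw [Real.dist_eq] at this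
      refine this.trans ?_
      gcongr
      exact dist_le_pi_dist x y i
    calc _ ≤ (KS * dist x y) * (N * MI) + MS * (N * (KI * dist x y)) := by
          gcongr
          · exact hsum x
          · exact hMS _
          · exact hsumL x y
      _ = _ := by ring
  obtain ⟨x, hx0, hx⟩ := exists_global_solution F _ _ hFL hFM θ0
  exact ⟨fun i t => x t i, fun i => by simp [hx0], fun i t _ => (hasDerivAt_pi.1 (hx t)) i⟩

/-! ### Barriers for scalar trajectories -/

/-- A trajectory that points strictly downwards whenever it meets the level `c` cannot cross `c`
from below. -/
theorem le_of_barrier {f f' : ℝ → ℝ} {a b c : ℝ}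
    (hf : ∀ t ∈ Set.Icc a b, HasDerivAt f (f' t) t) (ha : f a ≤ c)
    (h : ∀ t ∈ Set.Ico a b, f t = c → f' t < 0) : ∀ t ∈ Set.Icc a b, f t ≤ c := by
  intro t ht
  exact image_le_of_deriv_right_lt_deriv_boundary' (f := f) (f' := f') (B := fun _ => c)
    (B' := fun _ => 0) (fun s hs => (hf s hs).continuousAt.continuousWithinAt)
    (fun s hs => (hf s (Set.Ico_subset_Icc_self hs)).hasDerivWithinAt) ha continuousOn_const
    (fun s _ => hasDerivWithinAt_const _ _ _) h ht

theorem ge_of_barrier {f f' : ℝ → ℝ} {a b c : ℝ}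
    (hf : ∀ t ∈ Set.Icc a b, HasDerivAt f (f' t) t) (ha : c ≤ f a)
    (h : ∀ t ∈ Set.Ico a b, f t = c → 0 < f' t) : ∀ t ∈ Set.Icc a b, c ≤ f t := by
  intro t ht
  have := le_of_barrier (f := fun s => -f s) (f' := fun s => -f' s) (c := -c)
    (fun s hs => (hf s hs).neg) (by linarith)
    (fun s hs hc => by linarith [h s hs (by linarith)]) t ht
  linarith

/-- The values of `f` on `[0,∞)` lie in an interval of length less than `2π`. -/
def Confined (f : ℝ → ℝ) : Prop :=
  ∃ a b : ℝ, b - a < 2 * Real.pi ∧ ∀ t : ℝ, 0 ≤ t → a ≤ f t ∧ f t ≤ b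

theorem Confined.oscLt2Pi {f : ℝ → ℝ} (h : Confined f) : OscLt2Pi f := by
  obtain ⟨a, b, hab, hf⟩ := h
  have hne : (f '' Set.Ici 0).Nonempty := ⟨f 0, 0, Set.self_mem_Ici, rfl⟩
  refine ⟨⟨b, ?_⟩, ⟨a, ?_⟩, ?_⟩
  · rintro _ ⟨t, ht, rfl⟩; exact (hf t ht).2
  · rintro _ ⟨t, ht, rfl⟩; exact (hf t ht).1
  · have h1 : sSup (f '' Set.Ici 0) ≤ b :=
      csSup_le hne (by rintro _ ⟨t, ht, rfl⟩; exact (hf t ht).2)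
    have h2 : a ≤ sInf (f '' Set.Ici 0) :=
      le_csInf hne (by rintro _ ⟨t, ht, rfl⟩; exact (hf t ht).1)
    linarith

/-- A trajectory in the gap `(α, 2π - α)` that reaches `α` at some time stays afterwards in the trap
`[-α, α]`; before that time it stays below `2π - α` by compactness. -/
theorem confined_of_hit {f f' : ℝ → ℝ} {α : ℝ} (hα : α < Real.pi)
    (hf : ∀ t, 0 ≤ t → HasDerivAt f (f' t) t)
    (h1 : ∀ t, 0 ≤ t → f t = α → f' t < 0)
    (h2 : ∀ t, 0 ≤ t → f t = -α → 0 < f' t)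
    (h3 : ∀ t, 0 ≤ t → f t = 2 * Real.pi - α → 0 < f' t)
    (hpos : 0 < α) (h0 : α < f 0) {t₁ : ℝ} (ht₁ : 0 ≤ t₁) (hit : f t₁ = α) : Confined f := by
  have hlow : ∀ t, 0 ≤ t → -α ≤ f t := fun t ht =>
    ge_of_barrier (f' := f') (b := t) (fun s hs => hf s hs.1) (by linarith)
      (fun s hs => h2 s hs.1) t ⟨ht, le_rfl⟩
  have hup : ∀ t, t₁ ≤ t → f t ≤ α := fun t ht =>
    le_of_barrier (f' := f') (b := t) (fun s hs => hf s (ht₁.trans hs.1)) hit.le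
      (fun s hs => h1 s (ht₁.trans hs.1)) t ⟨ht, le_rfl⟩
  obtain ⟨s, hs, hmax⟩ := isCompact_Icc.exists_isMaxOn (Set.nonempty_Icc.2 ht₁)
    (f := f) (fun u hu => (hf u hu.1).continuousAt.continuousWithinAt)
  have hsm : f s < 2 * Real.pi - α := by
    by_contra! hcon
    have := ge_of_barrier (f' := f') (b := t₁) (fun u hu => hf u (hs.1.trans hu.1)) hcon
      (fun u hu => h3 u (hs.1.trans hu.1)) t₁ ⟨hs.2, le_rfl⟩
    linarith
  refine ⟨-α, f s, by linarith, fun t ht => ⟨hlow t ht, ?_⟩⟩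
  rcases le_total t t₁ with h | h
  · exact hmax ⟨ht, h⟩
  · have : f t₁ ≤ f s := hmax ⟨ht₁, le_rfl⟩
    linarith [hup t h]

/-- A trajectory starting in the gap `(α, 2π - α)`, whose neighbouring intervals `[-α, α]` and
`[2π - α, 2π + α]` are traps, oscillates by less than `2π`: it stays in the gap, or falls into
exactly one of the traps. -/
theorem confined_of_gap {f f' : ℝ → ℝ} {α : ℝ} (hα : α < Real.pi) (hpos : 0 < α)
    (hf : ∀ t, 0 ≤ t → HasDerivAt f (f' t) t)
    (h1 : ∀ t, 0 ≤ t → f t = α → f' t < 0)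
    (h2 : ∀ t, 0 ≤ t → f t = -α → 0 < f' t)
    (h3 : ∀ t, 0 ≤ t → f t = 2 * Real.pi - α → 0 < f' t)
    (h4 : ∀ t, 0 ≤ t → f t = 2 * Real.pi + α → f' t < 0)
    (h0 : α < f 0) (h0' : f 0 < 2 * Real.pi - α) : Confined f := by
  by_cases hA : ∃ t, 0 ≤ t ∧ f t = α
  · obtain ⟨t, ht, h⟩ := hA
    exact confined_of_hit hα hf h1 h2 h3 hpos h0 ht h
  by_cases hB : ∃ t, 0 ≤ t ∧ f t = 2 * Real.pi - α
  · obtain ⟨t, ht, h⟩ := hB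
    -- the reflection `x ↦ 2π - x` exchanges the two traps
    obtain ⟨a, b, hab, hc⟩ := confined_of_hit (f := fun s => 2 * Real.pi - f s)
      (f' := fun s => -f' s) hα
      (fun s hs => by simpa using (hf s hs).const_sub (2 * Real.pi))
      (fun s hs e => by linarith [h3 s hs (by linarith)])
      (fun s hs e => by linarith [h4 s hs (by linarith)])
      (fun s hs e => by linarith [h1 s hs (by linarith)])
      hpos (by linarith) ht (by linarith)
    exact ⟨2 * Real.pi - b, 2 * Real.pi - a, by linarith, fun s hs =>
      ⟨by linarith [(hc s hs).2], by linarith [(hc s hs).1]⟩⟩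
  · push Not at hA hB
    have cont : ∀ t, ContinuousOn f (Set.Icc 0 t) := fun t s hs =>
      (hf s hs.1).continuousAt.continuousWithinAt
    refine ⟨α, 2 * Real.pi - α, by linarith, fun t ht => ⟨?_, ?_⟩⟩
    · by_contra! hcon
      obtain ⟨s, hs, e⟩ := intermediate_value_Icc' ht (cont t) ⟨hcon.le, h0.le⟩
      exact hA s hs.1 e
    · by_contra! hcon
      obtain ⟨s, hs, e⟩ := intermediate_value_Icc ht (cont t) ⟨h0'.le, hcon.le⟩
      exact hB s hs.1 e

/-! ### Persistence of the average influence -/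

/-- The deterministic core. If the oscillators starting in `[-α, α]` alone carry more influence than
`K / c₃` and the coupling beats the frequencies at influence level `K`, then `R` stays above `K`
forever and every oscillator oscillates by less than `2π`. -/
theorem persistence {N : ℕ} (hN : 1 ≤ N) {ω : Fin N → ℝ} {κ : ℝ} {I S : ℝ → ℝ}
    {α₀ α c₃ K m W : ℝ} (hIc : Continuous I) (hI0 : ∀ x, 0 ≤ I x)
    (hSp : Function.Periodic S (2 * Real.pi)) (hα₀ : 0 < α₀) (hα₀α : α₀ ≤ α) (hα : α < Real.pi)
    (hm : 0 < m) (hκ : 0 < κ) (hW : ∀ i, |ω i| ≤ W) (hWm : W < κ * m * K)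
    (hSd : ∀ β ∈ Set.Icc α₀ α, S β ≤ -m) (hSu : ∀ β ∈ Set.Icc α₀ α, m ≤ S (-β))
    (hC3 : ∀ x ∈ Set.Icc (-Real.pi) Real.pi, ∀ φ : ℝ, |φ| ≤ max |x| α₀ → c₃ * I x ≤ I φ)
    {θ0 : Fin N → ℝ} (hbox : ∀ i, θ0 i ∈ Set.Icc (-Real.pi) Real.pi)
    (hK : K < (N : ℝ)⁻¹ * ∑ i with |θ0 i| ≤ α, c₃ * I (θ0 i))
    {θ : Fin N → ℝ → ℝ} (hθ : IsGenWinfreeSol N ω κ I S θ0 θ) :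
    (∀ t : ℝ, 0 ≤ t → K < avgInfl N I θ t) ∧ ∀ i, OscLt2Pi (θ i) := by
  obtain ⟨hθ0, hd⟩ := hθ
  have hN' : (0 : ℝ) < N := by exact_mod_cast hN
  have down : ∀ i x A, S x ≤ -m → K < (N : ℝ)⁻¹ * A → ω i + κ / (N : ℝ) * S x * A < 0 := by
    intro i x A hx hA
    have hA0 : 0 < (N : ℝ)⁻¹ * A := by
      have : 0 < κ * m * K := lt_of_le_of_lt ((abs_nonneg _).trans (hW i)) hWm
      exact (pos_of_mul_pos_right this (by positivity)).trans hA
    have e : κ / (N : ℝ) * S x * A = κ * (S x * ((N : ℝ)⁻¹ * A)) := by ring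
    have h1 : S x * ((N : ℝ)⁻¹ * A) ≤ -m * ((N : ℝ)⁻¹ * A) := by gcongr
    have h2 : κ * (S x * ((N : ℝ)⁻¹ * A)) ≤ κ * (-m * ((N : ℝ)⁻¹ * A)) := by gcongr
    have h3 : κ * m * K < κ * m * ((N : ℝ)⁻¹ * A) := by gcongr
    rw [e]
    linarith [le_abs_self (ω i), hW i]
  have up : ∀ i x A, m ≤ S x → K < (N : ℝ)⁻¹ * A → 0 < ω i + κ / (N : ℝ) * S x * A := by
    intro i x A hx hA
    have hA0 : 0 < (N : ℝ)⁻¹ * A := by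
      have : 0 < κ * m * K := lt_of_le_of_lt ((abs_nonneg _).trans (hW i)) hWm
      exact (pos_of_mul_pos_right this (by positivity)).trans hA
    have e : κ / (N : ℝ) * S x * A = κ * (S x * ((N : ℝ)⁻¹ * A)) := by ring
    have h1 : m * ((N : ℝ)⁻¹ * A) ≤ S x * ((N : ℝ)⁻¹ * A) := by gcongr
    have h2 : κ * (m * ((N : ℝ)⁻¹ * A)) ≤ κ * (S x * ((N : ℝ)⁻¹ * A)) := by gcongr
    have h3 : κ * m * K < κ * m * ((N : ℝ)⁻¹ * A) := by gcongr
    rw [e]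
    linarith [neg_abs_le (ω i), hW i]
  -- each oscillator starting in `[-α, α]` keeps its own barrier as long as `R > K`
  have trap : ∀ T : ℝ, 0 ≤ T → (∀ t ∈ Set.Ico 0 T, K < avgInfl N I θ t) →
      ∀ i, |θ0 i| ≤ α → |θ i T| ≤ max |θ0 i| α₀ := by
    intro T hT hR i hi
    set β := max |θ0 i| α₀ with hβ
    have hβm : β ∈ Set.Icc α₀ α := ⟨le_max_right _ _, max_le hi hα₀α⟩
    have hini : |θ i 0| ≤ β := by rw [hθ0]; exact le_max_left _ _
    rw [abs_le] at hini ⊢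
    constructor
    · exact ge_of_barrier (fun t ht => hd i t ht.1) hini.1
        (fun t ht e => up i _ _ (e ▸ hSu β hβm) (hR t ht)) T ⟨hT, le_rfl⟩
    · exact le_of_barrier (fun t ht => hd i t ht.1) hini.2
        (fun t ht e => down i _ _ (e ▸ hSd β hβm) (hR t ht)) T ⟨hT, le_rfl⟩
  have step : ∀ T : ℝ, 0 ≤ T → (∀ t ∈ Set.Ico 0 T, K < avgInfl N I θ t) →
      K < avgInfl N I θ T := by
    intro T hT hR
    refine hK.trans_le ?_
    unfold avgInfl
    gcongr
    calc ∑ i with |θ0 i| ≤ α, c₃ * I (θ0 i) ≤ ∑ i with |θ0 i| ≤ α, I (θ i T) := by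
          refine Finset.sum_le_sum fun i hi => ?_
          exact hC3 _ (hbox i) _ (trap T hT hR i (Finset.mem_filter.1 hi).2)
      _ ≤ ∑ i, I (θ i T) :=
          Finset.sum_le_sum_of_subset_of_nonneg (Finset.filter_subset _ _) fun i _ _ => hI0 _
  have hR : ∀ t : ℝ, 0 ≤ t → K < avgInfl N I θ t := by
    by_contra! hcon
    obtain ⟨t, ht, htK⟩ := hcon
    have hcont : ContinuousOn (avgInfl N I θ) (Set.Icc 0 t) := by
      unfold avgInfl
      refine continuousOn_const.mul (continuousOn_finsetSum _ fun i _ => ?_)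
      exact hIc.comp_continuousOn fun s hs => (hd i s hs.1).continuousAt.continuousWithinAt
    -- the first time at which `R ≤ K`
    have hcl : IsCompact {s ∈ Set.Icc 0 t | avgInfl N I θ s ≤ K} :=
      isCompact_Icc.of_isClosed_subset
        (hcont.preimage_isClosed_of_isClosed isClosed_Icc isClosed_Iic) fun s hs => hs.1
    obtain ⟨T, hT, hmin⟩ := hcl.exists_isLeast ⟨t, ⟨ht, le_rfl⟩, htK⟩
    refine (step T hT.1.1 fun s hs => ?_).not_ge hT.2
    by_contra! hcon
    exact hs.2.not_ge (hmin ⟨⟨hs.1, hs.2.le.trans hT.1.2⟩, hcon⟩)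
  refine ⟨hR, fun i => Confined.oscLt2Pi ?_⟩
  have hαm : α ∈ Set.Icc α₀ α := ⟨hα₀α, le_rfl⟩
  have hpos : 0 < α := hα₀.trans_le hα₀α
  have S1 : S α ≤ -m := hSd α hαm
  have S2 : m ≤ S (-α) := hSu α hαm
  have S3 : m ≤ S (2 * Real.pi - α) := by
    rw [← hSp (-α)] at S2; convert S2 using 2; ring
  have S4 : S (2 * Real.pi + α) ≤ -m := by
    rw [← hSp α] at S1; convert S1 using 2; ring
  by_cases hi : |θ0 i| ≤ α
  · refine ⟨-α, α, by linarith, fun t ht => abs_le.1 ?_⟩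
    exact (trap t ht (fun s hs => hR s hs.1) i hi).trans (max_le hi hα₀α)
  obtain ⟨b1, b2⟩ := hbox i
  rcases lt_abs.1 (not_le.1 hi) with h | h
  · exact confined_of_gap hα hpos (hd i)
      (fun t ht e => down i _ _ (e ▸ S1) (hR t ht)) (fun t ht e => up i _ _ (e ▸ S2) (hR t ht))
      (fun t ht e => up i _ _ (e ▸ S3) (hR t ht)) (fun t ht e => down i _ _ (e ▸ S4) (hR t ht))
      (by rw [hθ0]; exact h) (by rw [hθ0]; linarith)
  · -- an oscillator starting in `[-π, -α)` is moved into the gap by a full turn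
    have hS : ∀ t, S (θ i t) = S (θ i t + 2 * Real.pi) := fun t => (hSp _).symm
    obtain ⟨a, b, hab, hc⟩ := confined_of_gap (f := fun t => θ i t + 2 * Real.pi) hα hpos
      (fun t ht => (hd i t ht).add_const _)
      (fun t ht e => down i _ _ (by rw [hS, e]; exact S1) (hR t ht))
      (fun t ht e => up i _ _ (by rw [hS, e]; exact S2) (hR t ht))
      (fun t ht e => up i _ _ (by rw [hS, e]; exact S3) (hR t ht))
      (fun t ht e => down i _ _ (by rw [hS, e]; exact S4) (hR t ht))
      (by simp only [hθ0]; linarith) (by simp only [hθ0]; linarith)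
    exact ⟨a - 2 * Real.pi, b - 2 * Real.pi, by linarith, fun t ht =>
      ⟨by linarith [(hc t ht).1], by linarith [(hc t ht).2]⟩⟩

/-- The two lower bounds on `κ` say exactly that the coupling beats the frequencies at distance
`δ = min ((R*/(4c₂))^{1/q}) (π - α₀)` from `π` when the average influence is `c₃R*/4`. -/
theorem coupling_beats_frequencies {κ α₀ p q c₁ c₂ c₃ W Rstar : ℝ}
    (hc₁ : 0 < c₁) (hc₂ : 0 < c₂) (hc₃ : 0 < c₃) (hα₀ : α₀ < Real.pi) (hRpos : 0 < Rstar)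
    (hκ : max (4 * (4 * c₂) ^ (p/q) / (c₁ * c₃) * W / Rstar ^ (1 + p/q))
        (4 / (c₁ * c₃ * (Real.pi - α₀) ^ p) * W / Rstar) < κ) :
    W < κ * (c₁ * (min ((Rstar / (4 * c₂)) ^ (1 / q)) (Real.pi - α₀)) ^ p)
      * (c₃ * Rstar / 4) := by
  obtain ⟨h1, h2⟩ := max_lt_iff.1 hκ
  clear hκ
  rcases min_choice ((Rstar / (4 * c₂)) ^ (1 / q)) (Real.pi - α₀) with h | h <;> rw [h]
  · have e : ((Rstar / (4 * c₂)) ^ (1 / q)) ^ p = Rstar ^ (p/q) / (4 * c₂) ^ (p/q) := by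
      rw [← Real.rpow_mul (by positivity), one_div_mul_eq_div,
        Real.div_rpow hRpos.le (by positivity)]
    rw [e]
    rw [Real.rpow_add hRpos, Real.rpow_one] at h1
    have ha : 0 < (4 * c₂) ^ (p/q) := by positivity
    have hb : 0 < Rstar ^ (p/q) := by positivity
    generalize (4 * c₂) ^ (p/q) = a at *
    generalize Rstar ^ (p/q) = b at *
    have : 4 * a / (c₁ * c₃) * W / (Rstar * b) = W / (c₁ * (b / a) * (c₃ * Rstar / 4)) := by
      field_simp
    rw [this, div_lt_iff₀ (by positivity)] at h1
    linarith
  · have ha : 0 < (Real.pi - α₀) ^ p := Real.rpow_pos_of_pos (by linarith) _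
    generalize (Real.pi - α₀) ^ p = a at *
    have : 4 / (c₁ * c₃ * a) * W / Rstar = W / (c₁ * a * (c₃ * Rstar / 4)) := by
      field_simp
    rw [this, div_lt_iff₀ (by positivity)] at h2
    linarith

/-- Initial data in the box with average influence above `R*/2` lead to the claimed behaviour:
at most `R*/4` of the influence comes from oscillators with `I(θ⁰) < R*/4`, and all the others lie
at distance at least `(R*/(4c₂))^{1/q}` from `±π`. -/
theorem good_of_influence (N : ℕ) (hN : 1 ≤ N) (ω : Fin N → ℝ) (κ : ℝ) (I S : ℝ → ℝ)
    (α₀ p q c₁ c₂ c₃ : ℝ)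
    (hGood : GoodIS I S) (hStruct : StructC I S α₀ p q c₁ c₂ c₃) (hI0 : ∀ x, 0 ≤ I x)
    (W : ℝ) (hW : ∀ i, |ω i| ≤ W) (Rstar : ℝ) (hRpos : 0 < Rstar)
    (hκ : max (4 * (4 * c₂) ^ (p/q) / (c₁ * c₃) * W / Rstar ^ (1 + p/q))
        (4 / (c₁ * c₃ * (Real.pi - α₀) ^ p) * W / Rstar) < κ)
    (θ0 : Fin N → ℝ) (hbox : ∀ i, θ0 i ∈ Set.Icc (-Real.pi) Real.pi)
    (hR0 : Rstar / 2 < (N : ℝ)⁻¹ * ∑ j, I (θ0 j)) :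
    ∃ θ : Fin N → ℝ → ℝ, IsGenWinfreeSol N ω κ I S θ0 θ ∧
      (∀ t : ℝ, 0 ≤ t → c₃ * Rstar / 4 < avgInfl N I θ t) ∧ ∀ i, OscLt2Pi (θ i) := by
  obtain ⟨θ, hθ⟩ := exists_winfree_solution N ω κ I S hGood θ0
  obtain ⟨⟨hα₀, hα₀π⟩, hp, hq, hc₁, hc₂, ⟨hc₃, hc₃'⟩, hSd, hSu, hC2, hC3⟩ := hStruct
  obtain ⟨-, hSp, ⟨KI, hIL⟩, -⟩ := hGood
  refine ⟨θ, hθ, ?_⟩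
  have hN' : (0 : ℝ) < N := by exact_mod_cast hN
  have hkey := coupling_beats_frequencies (p := p) hc₁ hc₂ hc₃ hα₀π hRpos hκ
  set δ := min ((Rstar / (4 * c₂)) ^ (1 / q)) (Real.pi - α₀)
  have hδ0 : 0 < δ := lt_min (by positivity) (by linarith)
  have hδα : δ ≤ Real.pi - α₀ := min_le_right _ _
  have hm : 0 < c₁ * δ ^ p := by positivity
  have hκ0 : 0 < κ := by
    have hW0 : 0 ≤ W := (abs_nonneg _).trans (hW ⟨0, hN⟩)
    refine lt_of_le_of_lt ?_ hκ
    exact le_max_of_le_left (by positivity)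
  clear hκ
  have hmono : ∀ β ∈ Set.Icc α₀ (Real.pi - δ), c₁ * δ ^ p ≤ c₁ * (Real.pi - β) ^ p := by
    intro β hβ
    gcongr
    linarith [hβ.2]
  refine persistence hN hIL.continuous hI0 hSp (α := Real.pi - δ) (m := c₁ * δ ^ p) hα₀
    (by linarith) (by linarith) hm hκ0 hW hkey ?_ ?_ hC3 hbox ?_ hθ
  · intro β hβ
    have := hSd β ⟨hβ.1, by linarith [hβ.2]⟩
    linarith [hmono β hβ]
  · intro β hβ
    have := hSu (-β) ⟨by linarith [hβ.2], by linarith [hβ.1]⟩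
    rw [neg_add_eq_sub] at this
    linarith [hmono β hβ]
  · have hfar : ∀ i, ¬ |θ0 i| ≤ Real.pi - δ → I (θ0 i) ≤ Rstar / 4 := by
      intro i hi
      have h0 : |θ0 i| ≤ Real.pi := abs_le.2 (hbox i)
      by_cases hα : |θ0 i| ≤ α₀
      · exact absurd (hα.trans (by linarith)) hi
      have h1 : Real.pi - |θ0 i| ≤ (Rstar / (4 * c₂)) ^ (1 / q) :=
        le_trans (by linarith) (min_le_left _ _)
      have h2 : (Real.pi - |θ0 i|) ^ q ≤ Rstar / (4 * c₂) := by
        calc (Real.pi - |θ0 i|) ^ q ≤ ((Rstar / (4 * c₂)) ^ (1 / q)) ^ q := by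
              gcongr
          _ = Rstar / (4 * c₂) := by
              rw [← Real.rpow_mul (by positivity), one_div_mul_cancel (by positivity),
                Real.rpow_one]
      calc I (θ0 i) ≤ c₂ * (Real.pi - |θ0 i|) ^ q := (hC2 _ (hbox i)).2
        _ ≤ c₂ * (Rstar / (4 * c₂)) := by gcongr
        _ = Rstar / 4 := by field_simp
    have hsplit := Finset.sum_filter_add_sum_filter_not Finset.univ
      (fun i => |θ0 i| ≤ Real.pi - δ) (fun i => I (θ0 i))
    have hbad : ∑ i with ¬ |θ0 i| ≤ Real.pi - δ, I (θ0 i) ≤ N * (Rstar / 4) := by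
      calc _ ≤ ∑ i with ¬ |θ0 i| ≤ Real.pi - δ, Rstar / 4 :=
            Finset.sum_le_sum fun i hi => hfar i (Finset.mem_filter.1 hi).2
        _ ≤ ∑ i : Fin N, Rstar / 4 :=
            Finset.sum_le_sum_of_subset_of_nonneg (Finset.filter_subset _ _)
              fun _ _ _ => by positivity
        _ = _ := by simp
    rw [lt_inv_mul_iff₀ hN'] at hR0 ⊢
    rw [← Finset.mul_sum]
    have : N * (Rstar / 4) < ∑ i with |θ0 i| ≤ Real.pi - δ, I (θ0 i) := by linarith
    calc N * (c₃ * Rstar / 4) = c₃ * (N * (Rstar / 4)) := by ring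
      _ < _ := by gcongr

/-! ### Concentration of the initial average influence -/

/-- Hoeffding's inequality for the average influence of independent initial data: outside an event
of probability at most `exp(-(R*)² N / (2 sup|I|²))` it exceeds `R* / 2`. -/
theorem hoeffding_influence (N : ℕ) (hN : 1 ≤ N) (I : ℝ → ℝ) (hI : Measurable I) (B : ℝ)
    (hB : ∀ x, I x ∈ Set.Icc 0 B) (μ : Measure ℝ) [IsProbabilityMeasure μ] (Rstar : ℝ)
    (hR : Rstar = ∫ x, I x ∂μ) (hRpos : 0 < Rstar) :
    (Measure.pi fun _ : Fin N => μ).real {x | (N : ℝ)⁻¹ * ∑ j, I (x j) ≤ Rstar / 2} ≤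
      Real.exp (-(Rstar ^ 2 * N) / (2 * B ^ 2)) := by
  have hN' : (0 : ℝ) < N := by exact_mod_cast hN
  have hBpos : 0 < B := by
    by_contra! hcon
    have : ∀ x, I x = 0 := fun x => le_antisymm ((hB x).2.trans hcon) (hB x).1
    simp [this] at hR
    exact hRpos.ne' hR
  have hind := ProbabilityTheory.iIndepFun_pi (μ := fun _ : Fin N => μ)
    (X := fun _ x => -I x - ∫ y, -I y ∂μ) (fun _ => by fun_prop)
  have hsub : ∀ i ∈ (Finset.univ : Finset (Fin N)), ProbabilityTheory.HasSubgaussianMGF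
      (fun x : Fin N → ℝ => -I (x i) - ∫ y, -I y ∂μ) ((‖(0 : ℝ) - (-B)‖₊ / 2) ^ 2)
      (Measure.pi fun _ : Fin N => μ) := by
    intro i _
    have h := ProbabilityTheory.hasSubgaussianMGF_of_mem_Icc (μ := μ) (X := fun x => -I x)
      (a := -B) (b := 0) (by fun_prop)
      (Eventually.of_forall fun x => ⟨by linarith [(hB x).2], by linarith [(hB x).1]⟩)
    refine ProbabilityTheory.HasSubgaussianMGF.of_map (Y := fun x : Fin N → ℝ => x i)
      (X := fun x => -I x - ∫ y, -I y ∂μ) (measurable_pi_apply i).aemeasurable ?_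
    rw [(measurePreserving_eval (fun _ : Fin N => μ) i).map_eq]
    exact h
  have hoef := ProbabilityTheory.HasSubgaussianMGF.measure_sum_ge_le_of_iIndepFun hind hsub
    (ε := N * Rstar / 2) (by positivity)
  refine (measureReal_mono ?_).trans (hoef.trans_eq ?_)
  · intro x hx
    simp only [Set.mem_ofPred_eq] at hx ⊢
    rw [Finset.sum_sub_distrib, Finset.sum_neg_distrib, integral_neg, ← hR]
    rw [inv_mul_le_iff₀ hN'] at hx
    simp only [Finset.sum_const, Finset.card_univ, Fintype.card_fin, nsmul_eq_mul]
    linarith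
  · congr 1
    simp only [Finset.sum_const, Finset.card_univ, Fintype.card_fin, nsmul_eq_mul]
    push_cast
    rw [zero_sub, neg_neg, Real.norm_of_nonneg hBpos.le]
    field_simp

theorem stmt10 (N : ℕ) (hN : 1 ≤ N) (ω : Fin N → ℝ) (κ : ℝ) (I S : ℝ → ℝ)
    (α₀ p q c₁ c₂ c₃ : ℝ)
    (hGood : GoodIS I S) (hStruct : StructC I S α₀ p q c₁ c₂ c₃)
    (Ωn : ℝ) (hΩn : IsGreatest (Set.range fun i => |ω i|) Ωn)
    (Isup : ℝ) (hIsup : IsLUB (Set.range fun x => |I x|) Isup)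
    (μ : Measure ℝ) [IsProbabilityMeasure μ]
    (hμsupp : μ (Set.Icc (-Real.pi) Real.pi)ᶜ = 0)
    (Rstar : ℝ) (hRstar : Rstar = ∫ x, I x ∂μ) (hRpos : 0 < Rstar)
    (hκ : max (4 * (4 * c₂) ^ (p/q) / (c₁ * c₃) * Ωn / Rstar ^ (1 + p/q))
        (4 / (c₁ * c₃ * (Real.pi - α₀) ^ p) * Ωn / Rstar) < κ) :
    ENNReal.ofReal (1 - Real.exp (-(Rstar^2 * N) / (2 * Isup^2))) ≤
      (Measure.pi fun _ : Fin N => μ)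
        {θ0 : Fin N → ℝ | ∃ θ : Fin N → ℝ → ℝ, IsGenWinfreeSol N ω κ I S θ0 θ ∧
          (∀ t : ℝ, 0 ≤ t → c₃ * Rstar / 4 < avgInfl N I θ t) ∧
          ∀ i, OscLt2Pi (θ i)} := by
  have hI0 : ∀ x, 0 ≤ I x := by
    intro x
    obtain ⟨y, hy, hxy⟩ := hGood.1.exists_mem_Ico (by positivity) x (-Real.pi)
    rw [hxy]
    exact (hStruct.2.2.2.2.2.2.2.2.1 y ⟨hy.1, by linarith [hy.2]⟩).1
  have hIc : Continuous I := let ⟨_, hK⟩ := hGood.2.2.1; hK.continuous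
  have hIB : ∀ x, I x ∈ Set.Icc 0 Isup := fun x =>
    ⟨hI0 x, (le_abs_self _).trans (hIsup.1 ⟨x, rfl⟩)⟩
  have hoef := hoeffding_influence N hN I hIc.measurable Isup hIB μ Rstar hRstar hRpos
  set P := Measure.pi fun _ : Fin N => μ with hP
  set A := {x : Fin N → ℝ | (N : ℝ)⁻¹ * ∑ j, I (x j) ≤ Rstar / 2} with hA
  have hAm : MeasurableSet A := measurableSet_le (by fun_prop) measurable_const
  have hbox : ∀ᵐ x ∂P, ∀ i, x i ∈ Set.Icc (-Real.pi) Real.pi := by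
    rw [ae_all_iff]
    intro i
    exact (measurePreserving_eval (fun _ : Fin N => μ) i).quasiMeasurePreserving.ae
      (p := fun y => y ∈ Set.Icc (-Real.pi) Real.pi) hμsupp
  calc ENNReal.ofReal (1 - Real.exp (-(Rstar^2 * N) / (2 * Isup^2)))
      ≤ ENNReal.ofReal (P.real Aᶜ) := by
        rw [probReal_compl_eq_one_sub hAm]
        gcongr
    _ = P Aᶜ := ofReal_measureReal
    _ ≤ _ := by
        refine measure_mono_ae ?_
        filter_upwards [hbox] with x hx hxA
        exact good_of_influence N hN ω κ I S α₀ p q c₁ c₂ c₃ hGood hStruct hI0 Ωn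
          (fun i => hΩn.2 ⟨i, rfl⟩) Rstar hRpos hκ x hx (not_le.1 hxA)
end

section
/- Assume the interaction functions I and S satisfy the structural conditions (C1), (C2), (C3). Let μ be a probability measure on [−π,π] and suppose there are C_μ, β > 0 with ∫_{−π}^{π} e^{−λ I(θ)} dμ(θ) ≤ C_μ/λ^β for all λ > 0. Suppose κ > max{ (2(2c_2)^{p/q}/(c_1c_3)) (e/β)^{1+p/q} C_μ^{(1+p/q)/β} ‖Ω‖_∞, (2eC_μ^{1/β}/(c_1c_3(π−α_0)^p β)) ‖Ω‖_∞ }. Then the μ^{⊗N}-measure of the set of initial data (θ_1^0,…,θ_N^0) ∈ [−π,π]^N whose solution of the Winfree model satisfies sup_{t≥0} θ_i(t) − inf_{t≥0} θ_i(t) < 2π for all i = 1,…,N is at least 1 − C_μ^N (e/β)^{βN} · M^{βN}, where M = max{ ((2/(c_1c_3)) ‖Ω‖_∞/κ)^{1/(1+p/q)} (2c_2)^{(p/q)/(1+p/q)}, (2/(c_1c_3(π−α_0)^p)) ‖Ω‖_∞/κ } and μ^{⊗N} is the N-fold product measure on [−π,π]^N. -/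
/-!
Call `R₀` the initial average influence and `M` the maximum in the conclusion. The theorem combines
a deterministic statement (`R₀ > M` forces every oscillation to be less than `2π`) with a Chernoff
bound for the event `R₀ ≤ M`.

*Deterministic part* (`osc_of_large_infl`). Put `δ = (R₀ / (2c₂))^(1/q)` and
`b = max (π - δ) α₀ < π`. By (C2), the oscillators that start at angular distance less than `π - b`
from `π` together contribute at most `R₀/2` to the average influence, so those with `|θⱼ⁰| ≤ b`
contribute at least `R₀/2`. As long as each of the latter stays in `[-mⱼ, mⱼ]`, `mⱼ = max |θⱼ⁰| α₀`, (C3)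
gives `R(t) ≥ c₃ R₀ / 2`; conversely, at this level of influence (C1) makes the coupling term at
`± mⱼ` point inwards and dominate `‖Ω‖_∞`: this is precisely what `R₀ > M` says
(`exists_barrier_angle`). The two facts sustain each other by the barrier principle (`barrier`), so
`R(t) ≥ c₃ R₀ / 2` for all time. Consequently all the intervals `[-b, b] + 2πk` are traps for every
oscillator. One that starts outside `[-b, b]` either stays forever in a gap, of length
`2(π - b) < 2π`, or leaves the gap through one of its ends and is trapped from then on; in the
latter case compactness up to the exit time gives the strict inequality (`osc_aux`).

*Probabilistic part* (`chernoff_opt`). Markov's inequality for `exp (-λ ∑ I(θⱼ))` gives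
`P(R₀ ≤ M) ≤ e^(λNM) (C_μ / λ^β)^N`. The choice `λ = β / M` yields the stated bound; when `M = 0`
(all frequencies vanish) one lets `λ → ∞` instead.

Existence of global solutions holds because the vector field is bounded and globally Lipschitz
(`exists_winfree`).
-/

open MeasureTheory Filter

/-! ### Global solutions of bounded Lipschitz equations -/

/-- For a bounded field the Picard–Lindelöf theorem applies on every interval `[-n-1, n+1]`, since
the radius of the ball on which it is used may be taken as large as needed. -/
theorem exists_global_sol {E : Type*} [NormedAddCommGroup E] [NormedSpace ℝ E] [CompleteSpace E]
    (F : E → E) (K L : NNReal) (hK : LipschitzWith K F) (hL : ∀ x, ‖F x‖ ≤ L) (x₀ : E) :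
    ∃ α : ℝ → E, α 0 = x₀ ∧ ∀ t, HasDerivAt α (F (α t)) t := by
  have key : ∀ n : ℕ, ∃ α : ℝ → E, α 0 = x₀ ∧
      ∀ t ∈ Set.Ioo (-((n : ℝ) + 1)) ((n : ℝ) + 1), HasDerivAt α (F (α t)) t := by
    intro n
    have hn : (0 : ℝ) ≤ (n : ℝ) + 1 := by positivity
    have hpl : IsPicardLindelof (fun _ => F) (tmin := -((n : ℝ) + 1)) (tmax := (n : ℝ) + 1)
        ⟨0, by constructor <;> linarith⟩ x₀ (L * ((n : NNReal) + 1)) 0 L K := by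
      refine IsPicardLindelof.of_time_independent (fun x _ => hL x) hK.lipschitzOnWith ?_
      simp
    obtain ⟨α, h0, hα⟩ := hpl.exists_eq_forall_mem_Icc_hasDerivWithinAt₀
    exact ⟨α, h0, fun t ht =>
      (hα t (Set.Ioo_subset_Icc_self ht)).hasDerivAt (Icc_mem_nhds ht.1 ht.2)⟩
  choose A hA0 hA using key
  -- By uniqueness, the solutions on nested intervals agree on the smaller one.
  have hEq : ∀ m n : ℕ, m ≤ n →
      Set.EqOn (A m) (A n) (Set.Ioo (-((m : ℝ) + 1)) ((m : ℝ) + 1)) := by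
    intro m n hmn
    have hmn' : (m : ℝ) ≤ n := by exact_mod_cast hmn
    have hm : (0 : ℝ) ≤ m := by positivity
    refine ODE_solution_unique_of_mem_Ioo (v := fun _ => F) (s := fun _ => Set.univ) (K := K)
      (t₀ := 0) (fun _ _ => hK.lipschitzOnWith) ⟨by linarith, by linarith⟩
      (fun t ht => ⟨hA m t ht, trivial⟩) (fun t ht => ⟨hA n t ⟨?_, ?_⟩, trivial⟩)
      (by rw [hA0, hA0])
    · linarith [ht.1]
    · linarith [ht.2]
  have hEq' : ∀ m n : ℕ, ∀ s : ℝ, |s| < m + 1 → |s| < n + 1 → A m s = A n s := by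
    intro m n s hm hn
    rcases le_total m n with h | h
    · exact hEq m n h (abs_lt.1 hm)
    · exact (hEq n m h (abs_lt.1 hn)).symm
  refine ⟨fun t => A ⌈|t|⌉₊ t, hA0 _, fun t => ?_⟩
  have ht : |t| < (⌈|t|⌉₊ : ℝ) + 1 := by linarith [Nat.le_ceil |t|]
  refine (hA ⌈|t|⌉₊ t (abs_lt.1 ht)).congr_of_eventuallyEq ?_
  filter_upwards [Ioo_mem_nhds (abs_lt.1 ht).1 (abs_lt.1 ht).2] with s hs
  exact hEq' _ _ s (by linarith [Nat.le_ceil |s|]) (abs_lt.2 hs)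

theorem exists_bound_of_periodic {f : ℝ → ℝ} (hp : Function.Periodic f (2 * Real.pi))
    (hc : Continuous f) : ∃ B : ℝ, 0 ≤ B ∧ ∀ x, |f x| ≤ B := by
  obtain ⟨B, hB⟩ := (isCompact_Icc (a := (0 : ℝ)) (b := 2 * Real.pi)).exists_bound_of_continuousOn
    hc.continuousOn
  have h : ∀ x, |f x| ≤ B := by
    intro x
    obtain ⟨y, hy, hxy⟩ := hp.exists_mem_Ico₀ Real.two_pi_pos x
    rw [hxy]
    exact hB y (Set.Ico_subset_Icc_self hy)
  exact ⟨B, (abs_nonneg _).trans (h 0), h⟩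

/-! ### Barriers and traps -/

/-- Barrier principle for finitely many functions: if, whenever all `g k` are nonpositive, those
that vanish have negative derivative, then the condition `∀ k, g k ≤ 0` persists. The hypothesis on
the derivatives may use that *all* the functions are nonpositive, which is what permits a
bootstrap. -/
theorem barrier {ι : Type*} [Finite ι] (g g' : ι → ℝ → ℝ) (T : ℝ)
    (hd : ∀ k, ∀ t, T ≤ t → HasDerivAt (g k) (g' k t) t) (h0 : ∀ k, g k T ≤ 0)
    (hb : ∀ t, T ≤ t → (∀ k, g k t ≤ 0) → ∀ k, g k t = 0 → g' k t < 0) :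
    ∀ t, T ≤ t → ∀ k, g k t ≤ 0 := by
  intro t ht
  have hsub : Set.Icc T t ⊆ {s | ∀ k, g k s ≤ 0} := by
    refine IsClosed.Icc_subset_of_forall_mem_nhdsWithin ?_ h0 ?_
    -- closedness of the set of good times
    · have : {s | ∀ k, g k s ≤ 0} ∩ Set.Icc T t =
          Set.Icc T t ∩ ⋂ k, (Set.Icc T t ∩ g k ⁻¹' Set.Iic 0) := by
        ext s
        simp only [Set.mem_inter_iff, Set.mem_ofPred_eq, Set.mem_iInter, Set.mem_preimage,
          Set.mem_Iic]
        constructor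
        · rintro ⟨h1, h2⟩
          exact ⟨h2, fun k => ⟨h2, h1 k⟩⟩
        · rintro ⟨h1, h2⟩
          exact ⟨fun k => (h2 k).2, h1⟩
      rw [this]
      refine isClosed_Icc.inter (isClosed_iInter fun k => ?_)
      refine ContinuousOn.preimage_isClosed_of_isClosed (fun s hs => ?_) isClosed_Icc isClosed_Iic
      exact (hd k s hs.1).continuousAt.continuousWithinAt
    · rintro s ⟨hs, hsT⟩
      have : ∀ k, ∀ᶠ u in nhdsWithin s (Set.Ioi s), g k u ≤ 0 := by
        intro k
        rcases (hs k).lt_or_eq with h | h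
        · filter_upwards [nhdsWithin_le_nhds
            ((hd k s hsT.1).continuousAt.eventually_lt continuousAt_const h)] with u hu
          exact hu.le
        -- where `g k` vanishes, its negative slope keeps it nonpositive just to the right
        · have h1 := (hd k s hsT.1).hasDerivWithinAt (s := Set.Ioi s)
          rw [hasDerivWithinAt_iff_tendsto_slope' (by simp)] at h1
          filter_upwards [h1.eventually (gt_mem_nhds (hb s hsT.1 hs k h)), self_mem_nhdsWithin]
            with u hu hsu
          rw [slope_def_field, h, sub_zero] at hu
          have hsu' : (0 : ℝ) < u - s := sub_pos.2 hsu
          by_contra hcon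
          exact absurd hu (not_lt.2 (div_nonneg (not_le.1 hcon).le hsu'.le))
      exact eventually_all.2 this
  exact hsub ⟨ht, le_rfl⟩

theorem trapped (f f' : ℝ → ℝ) (T lo hi : ℝ)
    (hd : ∀ t, T ≤ t → HasDerivAt f (f' t) t) (h0 : f T ∈ Set.Icc lo hi)
    (hhi : ∀ t, T ≤ t → f t = hi → f' t < 0) (hlo : ∀ t, T ≤ t → f t = lo → 0 < f' t) :
    ∀ t, T ≤ t → f t ∈ Set.Icc lo hi := by
  intro t ht
  have h1 := barrier (ι := Unit) (fun _ t => f t - hi) (fun _ => f') T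
    (fun _ t ht => (hd t ht).sub_const hi) (fun _ => by linarith [h0.2])
    (fun t ht _ _ h => hhi t ht (by linarith)) t ht ()
  have h2 := barrier (ι := Unit) (fun _ t => lo - f t) (fun _ t => - f' t) T
    (fun _ t ht => (hd t ht).const_sub lo) (fun _ => by linarith [h0.1])
    (fun t ht _ _ h => by linarith [hlo t ht (by linarith)]) t ht ()
  exact ⟨by linarith, by linarith⟩

/-- The case of `osc_bounds` in which `f` starts in the gap `(b, 2π - b)`: consider the first exit
time from the gap, after which `f` is trapped in `[-b, b]` or in `[2π - b, 2π + b]`. -/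
theorem osc_aux (f f' : ℝ → ℝ) (b : ℝ) (hb : 0 < b) (hbπ : b < Real.pi)
    (hd : ∀ t, 0 ≤ t → HasDerivAt f (f' t) t) (h0 : f 0 ∈ Set.Ioc b Real.pi)
    (hdn : ∀ t, 0 ≤ t → ∀ k : ℤ, f t = b + k * (2 * Real.pi) → f' t < 0)
    (hup : ∀ t, 0 ≤ t → ∀ k : ℤ, f t = -b + k * (2 * Real.pi) → 0 < f' t) :
    ∃ lo hi, hi - lo < 2 * Real.pi ∧ ∀ t, 0 ≤ t → f t ∈ Set.Icc lo hi := by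
  by_cases hin : ∀ t, 0 ≤ t → f t ∈ Set.Ioo b (2 * Real.pi - b)
  · exact ⟨b, 2 * Real.pi - b, by linarith, fun t ht => Set.Ioo_subset_Icc_self (hin t ht)⟩
  push Not at hin
  have hcont : ContinuousOn f (Set.Ici 0) := fun t ht =>
    (hd t ht).continuousAt.continuousWithinAt
  set A : Set ℝ := Set.Ici 0 ∩ f ⁻¹' (Set.Ioo b (2 * Real.pi - b))ᶜ with hA
  have hAcl : IsClosed A :=
    hcont.preimage_isClosed_of_isClosed isClosed_Ici isOpen_Ioo.isClosed_compl
  have hAne : A.Nonempty := by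
    obtain ⟨t, ht, h⟩ := hin
    exact ⟨t, ht, h⟩
  have hAbd : BddBelow A := ⟨0, fun t ht => ht.1⟩
  -- `T` is the first exit time from the gap
  set T := sInf A with hT
  have hTA : T ∈ A := hAcl.csInf_mem hAne hAbd
  have hT0 : 0 ≤ T := hTA.1
  have hbefore : ∀ t, 0 ≤ t → t < T → f t ∈ Set.Ioo b (2 * Real.pi - b) := by
    intro t ht htT
    by_contra h
    exact absurd (csInf_le hAbd (show t ∈ A from ⟨ht, h⟩)) (not_le.2 htT)
  have hTpos : 0 < T := by
    rcases hT0.lt_or_eq with h | h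
    · exact h
    · exfalso
      refine hTA.2 ?_
      rw [← h]
      exact ⟨h0.1, by linarith [h0.2]⟩
  have hTcl : f T ∈ Set.Icc b (2 * Real.pi - b) := by
    have h1 : Tendsto f (nhdsWithin T (Set.Iio T)) (nhds (f T)) :=
      (hd T hT0).continuousAt.tendsto.mono_left nhdsWithin_le_nhds
    refine isClosed_Icc.mem_of_tendsto h1 ?_
    filter_upwards [Ioo_mem_nhdsLT hTpos] with s hs
    exact Set.Ioo_subset_Icc_self (hbefore s hs.1.le hs.2)
  have hTends : f T = b ∨ f T = 2 * Real.pi - b := by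
    by_contra! hcon
    exact hTA.2 ⟨lt_of_le_of_ne hTcl.1 (Ne.symm hcon.1), lt_of_le_of_ne hTcl.2 hcon.2⟩
  have hcontT : ContinuousOn f (Set.Icc 0 T) := hcont.mono Set.Icc_subset_Ici_self
  have hneT : (Set.Icc 0 T).Nonempty := ⟨0, le_rfl, hT0⟩
  rcases hTends with hTb | hTb
  · have htr := trapped f f' T (-b) b (fun t ht => hd t (hT0.trans ht)) ⟨by linarith, hTb.le⟩
      (fun t ht h => hdn t (hT0.trans ht) 0 (by simpa using h))
      (fun t ht h => hup t (hT0.trans ht) 0 (by simpa using h))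
    -- up to time `T`, the maximum of `f` is attained, hence is strictly less than `2π - b`
    obtain ⟨s, hs, hmax⟩ := isCompact_Icc.exists_isMaxOn hneT hcontT
    have hfs : b ≤ f s ∧ f s < 2 * Real.pi - b := by
      rcases hs.2.lt_or_eq with h | h
      · exact ⟨(hbefore s hs.1 h).1.le, (hbefore s hs.1 h).2⟩
      · rw [h, hTb]; exact ⟨le_rfl, by linarith⟩
    refine ⟨-b, f s, by linarith, fun t ht => ?_⟩
    rcases le_total t T with h | h
    · refine ⟨?_, hmax ⟨ht, h⟩⟩
      rcases h.lt_or_eq with h | h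
      · linarith [(hbefore t ht h).1]
      · rw [h, hTb]; linarith
    · exact ⟨(htr t h).1, (htr t h).2.trans hfs.1⟩
  · have htr := trapped f f' T (2 * Real.pi - b) (2 * Real.pi + b)
      (fun t ht => hd t (hT0.trans ht)) ⟨hTb.ge, by linarith⟩
      (fun t ht h => hdn t (hT0.trans ht) 1 (by push_cast; linarith))
      (fun t ht h => hup t (hT0.trans ht) 1 (by push_cast; linarith))
    -- up to time `T`, the minimum of `f` is attained, hence is strictly greater than `b`
    obtain ⟨s, hs, hmin⟩ := isCompact_Icc.exists_isMinOn hneT hcontT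
    have hfs : b < f s ∧ f s ≤ 2 * Real.pi - b := by
      rcases hs.2.lt_or_eq with h | h
      · exact ⟨(hbefore s hs.1 h).1, (hbefore s hs.1 h).2.le⟩
      · rw [h, hTb]; exact ⟨by linarith, le_rfl⟩
    refine ⟨f s, 2 * Real.pi + b, by linarith, fun t ht => ?_⟩
    rcases le_total t T with h | h
    · refine ⟨hmin ⟨ht, h⟩, ?_⟩
      rcases h.lt_or_eq with h | h
      · linarith [(hbefore t ht h).2]
      · rw [h, hTb]; linarith
    · exact ⟨hfs.2.trans (htr t h).1, (htr t h).2⟩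

/-- If `f` can only cross the angles `b + 2πk` downwards and the angles `-b + 2πk` upwards, so that
all intervals `[-b, b] + 2πk` are traps, then the oscillation of `f` is less than `2π`. -/
theorem osc_bounds (f f' : ℝ → ℝ) (b : ℝ) (hb : 0 < b) (hbπ : b < Real.pi)
    (hd : ∀ t, 0 ≤ t → HasDerivAt f (f' t) t) (h0 : f 0 ∈ Set.Icc (-Real.pi) Real.pi)
    (hdn : ∀ t, 0 ≤ t → ∀ k : ℤ, f t = b + k * (2 * Real.pi) → f' t < 0)
    (hup : ∀ t, 0 ≤ t → ∀ k : ℤ, f t = -b + k * (2 * Real.pi) → 0 < f' t) :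
    ∃ lo hi, hi - lo < 2 * Real.pi ∧ ∀ t, 0 ≤ t → f t ∈ Set.Icc lo hi := by
  rcases lt_or_ge b (f 0) with h | h
  · exact osc_aux f f' b hb hbπ hd ⟨h, h0.2⟩ hdn hup
  rcases lt_or_ge (f 0) (-b) with hlt | hge
  -- the hypotheses are invariant under `f ↦ -f`
  · obtain ⟨lo, hi, hlohi, hmem⟩ := osc_aux (fun t => - f t) (fun t => - f' t) b hb hbπ
      (fun t ht => (hd t ht).neg) ⟨by linarith, by linarith [h0.1]⟩
      (fun t ht k hk => by
        have := hup t ht (-k) (by push_cast; linarith)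
        linarith)
      (fun t ht k hk => by
        have := hdn t ht (-k) (by push_cast; linarith)
        linarith)
    refine ⟨-hi, -lo, by linarith, fun t ht => ?_⟩
    have := hmem t ht
    exact ⟨by linarith [this.2], by linarith [this.1]⟩
  · exact ⟨-b, b, by linarith, trapped f f' 0 (-b) b hd ⟨hge, h⟩
      (fun t ht h => hdn t ht 0 (by simpa using h))
      (fun t ht h => hup t ht 0 (by simpa using h))⟩

/-! ### The Winfree model -/

/-- The Winfree vector field is bounded and globally Lipschitz, because `I` and `S` are. -/
theorem exists_winfree (N : ℕ) (ω : Fin N → ℝ) (κ : ℝ) (I S : ℝ → ℝ) (hGood : GoodIS I S)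
    (θ0 : Fin N → ℝ) : ∃ θ, IsGenWinfreeSol N ω κ I S θ0 θ := by
  obtain ⟨hIp, hSp, ⟨KI, hKI⟩, ⟨KS, hKS⟩⟩ := hGood
  obtain ⟨BI, hBI0, hBI⟩ := exists_bound_of_periodic hIp hKI.continuous
  obtain ⟨BS, hBS0, hBS⟩ := exists_bound_of_periodic hSp hKS.continuous
  set F : (Fin N → ℝ) → (Fin N → ℝ) :=
    fun x i => ω i + κ / (N : ℝ) * S (x i) * ∑ j, I (x j) with hF
  have hsum : ∀ x : Fin N → ℝ, |∑ j, I (x j)| ≤ N * BI := by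
    intro x
    refine (Finset.abs_sum_le_sum_abs _ _).trans ?_
    refine (Finset.sum_le_sum fun j _ => hBI (x j)).trans (by simp)
  have hsumd : ∀ x y : Fin N → ℝ, |∑ j, I (x j) - ∑ j, I (y j)| ≤ N * (KI * dist x y) := by
    intro x y
    rw [← Finset.sum_sub_distrib]
    refine (Finset.abs_sum_le_sum_abs _ _).trans ?_
    refine (Finset.sum_le_sum (g := fun _ => KI * dist x y) fun j _ => ?_).trans (by simp)
    have := hKI.dist_le_mul (x j) (y j)
    rw [Real.dist_eq] at this
    exact this.trans (mul_le_mul_of_nonneg_left (dist_le_pi_dist x y j) KI.2)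
  have hL : ∀ x, ‖F x‖ ≤ ‖ω‖ + |κ / N| * BS * (N * BI) := by
    intro x
    refine (pi_norm_le_iff_of_nonneg (by positivity)).2 fun i => ?_
    refine (norm_add_le _ _).trans (add_le_add (norm_le_pi_norm ω i) ?_)
    rw [Real.norm_eq_abs, abs_mul, abs_mul]
    gcongr
    · exact hBS _
    · exact hsum x
  have hK : ∀ x y, dist (F x) (F y) ≤
      (|κ / N| * (KS * (N * BI) + BS * (N * KI))) * dist x y := by
    intro x y
    refine (dist_pi_le_iff (by positivity)).2 fun i => ?_
    rw [Real.dist_eq]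
    have h1 : F x i - F y i = κ / N * ((S (x i) - S (y i)) * (∑ j, I (x j)) +
        S (y i) * (∑ j, I (x j) - ∑ j, I (y j))) := by
      simp only [hF]; ring
    have h2 : |S (x i) - S (y i)| ≤ KS * dist x y := by
      have := hKS.dist_le_mul (x i) (y i)
      rw [Real.dist_eq] at this
      exact this.trans (mul_le_mul_of_nonneg_left (dist_le_pi_dist x y i) KS.2)
    rw [h1, abs_mul, mul_assoc]
    refine mul_le_mul_of_nonneg_left ?_ (abs_nonneg _)
    refine (abs_add_le _ _).trans ?_
    rw [abs_mul, abs_mul]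
    have h3 : |S (x i) - S (y i)| * |∑ j, I (x j)| ≤ (KS * dist x y) * (N * BI) :=
      mul_le_mul h2 (hsum x) (abs_nonneg _) (by positivity)
    have h4 : |S (y i)| * |∑ j, I (x j) - ∑ j, I (y j)| ≤ BS * (N * (KI * dist x y)) :=
      mul_le_mul (hBS _) (hsumd x y) (abs_nonneg _) (by positivity)
    linarith
  obtain ⟨α, h0, hα⟩ := exists_global_sol F
    ⟨|κ / N| * (KS * (N * BI) + BS * (N * KI)), by positivity⟩
    ⟨‖ω‖ + |κ / N| * BS * (N * BI), by positivity⟩ (LipschitzWith.of_dist_le_mul hK) hL θ0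
  exact ⟨fun i t => α t i, fun i => congrFun h0 i, fun i t _ => (hasDerivAt_pi.1 (hα t)) i⟩

theorem oscLt2Pi_of_bounds {f : ℝ → ℝ}
    (h : ∃ lo hi, hi - lo < 2 * Real.pi ∧ ∀ t, 0 ≤ t → f t ∈ Set.Icc lo hi) : OscLt2Pi f := by
  obtain ⟨lo, hi, hlt, hmem⟩ := h
  have hne : (f '' Set.Ici 0).Nonempty := ⟨f 0, 0, Set.self_mem_Ici, rfl⟩
  refine ⟨⟨hi, ?_⟩, ⟨lo, ?_⟩, ?_⟩
  · rintro _ ⟨t, ht, rfl⟩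
    exact (hmem t ht).2
  · rintro _ ⟨t, ht, rfl⟩
    exact (hmem t ht).1
  · have h1 : sSup (f '' Set.Ici 0) ≤ hi := csSup_le hne (by
      rintro _ ⟨t, ht, rfl⟩
      exact (hmem t ht).2)
    have h2 : lo ≤ sInf (f '' Set.Ici 0) := le_csInf hne (by
      rintro _ ⟨t, ht, rfl⟩
      exact (hmem t ht).1)
    linarith

theorem infl_nonneg {I S : ℝ → ℝ} {α₀ p q c₁ c₂ c₃ : ℝ} (hGood : GoodIS I S)
    (hStruct : StructC I S α₀ p q c₁ c₂ c₃) (x : ℝ) : 0 ≤ I x := by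
  obtain ⟨y, hy, hxy⟩ := hGood.1.exists_mem_Ico Real.two_pi_pos x (-Real.pi)
  rw [hxy]
  exact (hStruct.2.2.2.2.2.2.2.2.1 y ⟨hy.1, by linarith [hy.2]⟩).1

/-- The barrier angle `b = max (π - δ) α₀` with `c₂ δ ^ q = R₀ / 2`. At `b`, the coupling at
influence level `c₃ R₀ / 2` beats the intrinsic frequencies, and beyond `b` the bound of (C2) is at
most `R₀ / 2`. The two terms of the maximum correspond to `b = π - δ` and `b = α₀`. -/
theorem exists_barrier_angle {κ α₀ p q c₁ c₂ c₃ Ωn R₀ : ℝ} (hα : α₀ ∈ Set.Ioo 0 Real.pi)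
    (hp : 1 ≤ p) (hq : 1 ≤ q) (hc₁ : 0 < c₁) (hc₂ : 0 < c₂) (hc₃ : 0 < c₃) (hκ : 0 < κ)
    (hΩ : 0 ≤ Ωn)
    (hR : max ((2 / (c₁ * c₃) * Ωn / κ) ^ (1 / (1 + p/q)) *
            (2 * c₂) ^ ((p/q) / (1 + p/q)))
          (2 / (c₁ * c₃ * (Real.pi - α₀) ^ p) * Ωn / κ) < R₀) :
    ∃ b, α₀ ≤ b ∧ b < Real.pi ∧ Ωn < κ * (c₁ * (Real.pi - b) ^ p) * (c₃ * R₀ / 2) ∧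
      ∀ x : ℝ, b ≤ x → x ≤ Real.pi → c₂ * (Real.pi - x) ^ q ≤ R₀ / 2 := by
  obtain ⟨hR1, hR2⟩ := max_lt_iff.1 hR
  have hp0 : 0 < p := by linarith
  have hq0 : 0 < q := by linarith
  have hπα : 0 < Real.pi - α₀ := by linarith [hα.2]
  have hRpos : 0 < R₀ := lt_of_le_of_lt (by positivity) hR2
  set δ : ℝ := (R₀ / (2 * c₂)) ^ (1 / q) with hδ
  have hδpos : 0 < δ := by positivity
  have hδq : c₂ * δ ^ q = R₀ / 2 := by
    rw [hδ, ← Real.rpow_mul (by positivity), one_div_mul_cancel hq0.ne', Real.rpow_one]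
    field_simp
  refine ⟨max (Real.pi - δ) α₀, le_max_right _ _, max_lt (by linarith) hα.2, ?_, ?_⟩
  · rcases le_total (Real.pi - δ) α₀ with h | h
    · rw [max_eq_right h]
      have hP : 0 < (Real.pi - α₀) ^ p := by positivity
      have : 2 / (c₁ * c₃ * (Real.pi - α₀) ^ p) * Ωn / κ =
        Ωn / (κ * (c₁ * (Real.pi - α₀) ^ p) * (c₃ / 2)) := by field_simp
      rw [this, div_lt_iff₀ (by positivity)] at hR2
      linarith
    · rw [max_eq_left h, sub_sub_cancel]
      set s := p / q with hs
      have hs0 : 0 < s := by positivity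
      have hδp : δ ^ p = R₀ ^ s / (2 * c₂) ^ s := by
        rw [hδ, ← Real.rpow_mul (by positivity), one_div_mul_eq_div,
          Real.div_rpow hRpos.le (by positivity)]
      set X := 2 / (c₁ * c₃) * Ωn / κ with hX
      have hX0 : 0 ≤ X := by positivity
      have h1 := Real.rpow_lt_rpow (by positivity) hR1 (show 0 < 1 + s by positivity)
      rw [Real.mul_rpow (by positivity) (by positivity), ← Real.rpow_mul hX0,
        ← Real.rpow_mul (by positivity), one_div_mul_cancel (by positivity), Real.rpow_one,
        div_mul_cancel₀ _ (by positivity), Real.rpow_add hRpos, Real.rpow_one] at h1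
      have hC : 0 < (2 * c₂) ^ s := by positivity
      rw [← lt_div_iff₀ hC] at h1
      have hXΩ : Ωn = X * (κ * c₁ * c₃ / 2) := by rw [hX]; field_simp
      rw [hδp, hXΩ]
      calc X * (κ * c₁ * c₃ / 2) < R₀ * R₀ ^ s / (2 * c₂) ^ s * (κ * c₁ * c₃ / 2) := by gcongr
        _ = _ := by ring
  · intro x hx hxπ
    have hx' : Real.pi - x ≤ δ := by linarith [le_max_left (Real.pi - δ) α₀]
    rw [← hδq]
    have := Real.rpow_le_rpow (by linarith) hx' hq0.le
    gcongr

/-- The deterministic part: a large initial average influence forces every oscillation to be less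
than `2π`. -/
theorem osc_of_large_infl (N : ℕ) (hN : 1 ≤ N) (ω : Fin N → ℝ) (κ : ℝ) (I S : ℝ → ℝ)
    (α₀ p q c₁ c₂ c₃ : ℝ)
    (hGood : GoodIS I S) (hStruct : StructC I S α₀ p q c₁ c₂ c₃)
    (Ωn : ℝ) (hΩn : ∀ i, |ω i| ≤ Ωn) (hκ : 0 < κ) (θ0 : Fin N → ℝ)
    (hθ0 : ∀ i, θ0 i ∈ Set.Icc (-Real.pi) Real.pi) (θ : Fin N → ℝ → ℝ)
    (hθ : IsGenWinfreeSol N ω κ I S θ0 θ)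
    (hR : max ((2 / (c₁ * c₃) * Ωn / κ) ^ (1 / (1 + p/q)) *
            (2 * c₂) ^ ((p/q) / (1 + p/q)))
          (2 / (c₁ * c₃ * (Real.pi - α₀) ^ p) * Ωn / κ) < avgInfl N I θ 0) (i : Fin N) :
    OscLt2Pi (θ i) := by
  have hI0 := infl_nonneg hGood hStruct
  obtain ⟨hIp, hSp, -, -⟩ := hGood
  obtain ⟨hα, hp, hq, hc₁, hc₂, hc₃, hS1, hS2, hI, hI3⟩ := hStruct
  have hN0 : (0 : ℝ) < N := by exact_mod_cast hN
  have hΩ0 : 0 ≤ Ωn := (abs_nonneg _).trans (hΩn i)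
  set R₀ := avgInfl N I θ 0 with hR₀
  obtain ⟨b, hαb, hbπ, hbΩ, hbI⟩ :=
    exists_barrier_angle hα hp hq hc₁ hc₂ hc₃.1 hκ hΩ0 hR
  have hp0 : 0 < p := by linarith
  set θ' : Fin N → ℝ → ℝ := fun i t =>
    ω i + κ / (N : ℝ) * S (θ i t) * ∑ j, I (θ j t) with hθ'
  have hθ'R : ∀ i t, θ' i t = ω i + κ * S (θ i t) * avgInfl N I θ t := by
    intro i t
    simp only [hθ', avgInfl]
    ring
  have hd : ∀ i t, 0 ≤ t → HasDerivAt (θ i) (θ' i t) t := hθ.2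
  -- While the average influence is at least `c₃ R₀ / 2`, the velocities at `± b' + 2πk` point
  -- towards `2πk`, for every `b' ∈ [α₀, b]`.
  have hdn : ∀ i t, c₃ * R₀ / 2 ≤ avgInfl N I θ t → ∀ b', α₀ ≤ b' → b' ≤ b →
      ∀ k : ℤ, θ i t = b' + k * (2 * Real.pi) → θ' i t < 0 := by
    intro i t hRt b' h1 h2 k hk
    rw [hθ'R, hk, hSp.int_mul k b']
    have hpow := Real.rpow_le_rpow (by linarith) (show Real.pi - b ≤ Real.pi - b' by linarith)
      hp0.le
    have hSb : S b' ≤ -(c₁ * (Real.pi - b) ^ p) := by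
      have := hS1 b' ⟨h1, by linarith⟩
      nlinarith
    have hpos : 0 ≤ c₁ * (Real.pi - b) ^ p :=
      mul_nonneg hc₁.le (Real.rpow_nonneg (by linarith) _)
    have hRn : 0 ≤ avgInfl N I θ t := by
      unfold avgInfl
      exact mul_nonneg (by positivity) (Finset.sum_nonneg fun j _ => hI0 _)
    have h3 : κ * S b' * avgInfl N I θ t ≤ -(κ * (c₁ * (Real.pi - b) ^ p) * avgInfl N I θ t) := by
      have := mul_le_mul_of_nonneg_right (mul_le_mul_of_nonneg_left hSb hκ.le) hRn
      linarith
    have h4 := mul_le_mul_of_nonneg_left hRt (mul_nonneg hκ.le hpos)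
    linarith [le_abs_self (ω i), hΩn i]
  have hup : ∀ i t, c₃ * R₀ / 2 ≤ avgInfl N I θ t → ∀ b', α₀ ≤ b' → b' ≤ b →
      ∀ k : ℤ, θ i t = -b' + k * (2 * Real.pi) → 0 < θ' i t := by
    intro i t hRt b' h1 h2 k hk
    rw [hθ'R, hk, hSp.int_mul k (-b')]
    have hpow := Real.rpow_le_rpow (by linarith) (show Real.pi - b ≤ Real.pi - b' by linarith)
      hp0.le
    have hSb : c₁ * (Real.pi - b) ^ p ≤ S (-b') := by
      have := hS2 (-b') ⟨by linarith, by linarith⟩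
      rw [neg_add_eq_sub] at this
      nlinarith
    have hpos : 0 ≤ c₁ * (Real.pi - b) ^ p :=
      mul_nonneg hc₁.le (Real.rpow_nonneg (by linarith) _)
    have hRn : 0 ≤ avgInfl N I θ t := by
      unfold avgInfl
      exact mul_nonneg (by positivity) (Finset.sum_nonneg fun j _ => hI0 _)
    have h3 : κ * (c₁ * (Real.pi - b) ^ p) * avgInfl N I θ t ≤ κ * S (-b') * avgInfl N I θ t :=
      mul_le_mul_of_nonneg_right (mul_le_mul_of_nonneg_left hSb hκ.le) hRn
    have h4 := mul_le_mul_of_nonneg_left hRt (mul_nonneg hκ.le hpos)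
    linarith [neg_abs_le (ω i), hΩn i]
  classical
  set G : Finset (Fin N) := Finset.univ.filter fun j => |θ0 j| ≤ b with hG
  -- the oscillators outside `G` account for at most half of the initial influence
  have hGsum : N * (R₀ / 2) ≤ ∑ j ∈ G, I (θ0 j) := by
    have h1 : N * R₀ = ∑ j, I (θ0 j) := by
      rw [hR₀, avgInfl, mul_inv_cancel_left₀ hN0.ne']
      exact Finset.sum_congr rfl fun j _ => by rw [hθ.1 j]
    have h2 := Finset.sum_filter_add_sum_filter_not Finset.univ (fun j => |θ0 j| ≤ b)
      (fun j => I (θ0 j))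
    have h3 : ∑ j ∈ Finset.univ.filter (fun j => ¬ |θ0 j| ≤ b), I (θ0 j) ≤ N * (R₀ / 2) := by
      have hRn : 0 ≤ R₀ := by
        rw [hR₀, avgInfl]
        exact mul_nonneg (by positivity) (Finset.sum_nonneg fun j _ => hI0 _)
      refine (Finset.sum_le_sum (g := fun _ => R₀ / 2) fun j hj => ?_).trans ?_
      · have hj' : b < |θ0 j| := by simpa using hj
        exact (hI _ (hθ0 j)).2.trans (hbI _ hj'.le (abs_le.2 (hθ0 j)))
      · rw [Finset.sum_const, nsmul_eq_mul]
        refine mul_le_mul_of_nonneg_right ?_ (by linarith)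
        exact_mod_cast (Finset.card_le_univ _).trans (by simp)
    linarith
  set m : Fin N → ℝ := fun j => max |θ0 j| α₀ with hm
  have hlow : ∀ t, (∀ j ∈ G, |θ j t| ≤ m j) → c₃ * R₀ / 2 ≤ avgInfl N I θ t := by
    intro t ht
    have h1 : c₃ * ∑ j ∈ G, I (θ0 j) ≤ ∑ j, I (θ j t) := by
      rw [Finset.mul_sum]
      refine (Finset.sum_le_sum fun j hj => hI3 _ (hθ0 j) _ (ht j hj)).trans ?_
      exact Finset.sum_le_sum_of_subset_of_nonneg (Finset.subset_univ _) fun j _ _ => hI0 _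
    have h2 := mul_le_mul_of_nonneg_left hGsum hc₃.1.le
    rw [avgInfl, inv_mul_eq_div, le_div_iff₀ hN0]
    linarith
  have hmG : ∀ j ∈ G, α₀ ≤ m j ∧ m j ≤ b := by
    intro j hj
    exact ⟨le_max_right _ _, max_le (by simpa [hG] using hj) hαb⟩
  -- The bootstrap: `barrier` is applied to the functions `± θ j - m j` with `j ∈ G`, which are
  -- indexed by `G × Bool`.
  have htrap : ∀ t, 0 ≤ t → ∀ j ∈ G, |θ j t| ≤ m j := by
    intro t ht j hj
    have hiff : ∀ t, (∀ k : G × Bool, (cond k.2 (θ k.1 t - m k.1) (-θ k.1 t - m k.1)) ≤ 0) →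
        ∀ j ∈ G, |θ j t| ≤ m j := by
      intro t h j hj
      have h1 := h (⟨j, hj⟩, true)
      have h2 := h (⟨j, hj⟩, false)
      simp only [cond_true, cond_false] at h1 h2
      exact abs_le.2 ⟨by linarith, by linarith⟩
    refine hiff t ?_ j hj
    refine barrier (fun (k : G × Bool) t => cond k.2 (θ k.1 t - m k.1) (-θ k.1 t - m k.1))
      (fun k t => cond k.2 (θ' k.1 t) (-θ' k.1 t)) 0 ?_ ?_ ?_ t ht
    · rintro ⟨⟨j, hj⟩, _ | _⟩ t ht
      · exact (hd j t ht).neg.sub_const _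
      · exact (hd j t ht).sub_const _
    · have : ∀ j, |θ j 0| ≤ m j := fun j => by rw [hθ.1 j]; exact le_max_left _ _
      rintro ⟨⟨j, hj⟩, _ | _⟩
      · simp only [cond_false]
        linarith [(abs_le.1 (this j)).1]
      · simp only [cond_true]
        linarith [(abs_le.1 (this j)).2]
    · rintro t ht hall ⟨⟨j, hj⟩, _ | _⟩ h
      · simp only [cond_false] at h ⊢
        have := hup j t (hlow t (hiff t hall)) (m j) (hmG j hj).1 (hmG j hj).2 0
          (by push_cast; linarith)
        linarith
      · simp only [cond_true] at h ⊢
        exact hdn j t (hlow t (hiff t hall)) (m j) (hmG j hj).1 (hmG j hj).2 0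
          (by push_cast; linarith)
  refine oscLt2Pi_of_bounds (osc_bounds (θ i) (θ' i) b (by linarith [hα.1]) hbπ (hd i)
    (by rw [hθ.1 i]; exact hθ0 i) ?_ ?_)
  · intro t ht k hk
    exact hdn i t (hlow t (htrap t ht)) b hαb le_rfl k hk
  · intro t ht k hk
    exact hup i t (hlow t (htrap t ht)) b hαb le_rfl k hk

/-! ### The Chernoff bound -/

theorem chernoff (N : ℕ) (hN : 1 ≤ N) (I : ℝ → ℝ) (hIc : Continuous I) (hI0 : ∀ x, 0 ≤ I x)
    (μ : Measure ℝ) [IsProbabilityMeasure μ] (Cμ β : ℝ)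
    (hmom : ∀ lam : ℝ, 0 < lam → ∫ x, Real.exp (-lam * I x) ∂μ ≤ Cμ / lam ^ β)
    (M lam : ℝ) (hlam : 0 < lam) :
    (Measure.pi fun _ : Fin N => μ).real {θ0 | (N : ℝ)⁻¹ * ∑ j, I (θ0 j) ≤ M} ≤
      Real.exp (lam * N * M) * (Cμ / lam ^ β) ^ N := by
  have hN0 : (0 : ℝ) < N := by exact_mod_cast hN
  set P := Measure.pi fun _ : Fin N => μ with hP
  set f : (Fin N → ℝ) → ℝ := fun x => ∏ j, Real.exp (-lam * I (x j)) with hf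
  have hint : Integrable f P := by
    refine Integrable.fintype_prod (f := fun (_ : Fin N) x => Real.exp (-lam * I x)) fun _ => ?_
    refine Integrable.of_bound (C := 1)
      (Continuous.aestronglyMeasurable (by fun_prop)) (ae_of_all _ fun x => ?_)
    rw [Real.norm_eq_abs, Real.abs_exp, Real.exp_le_one_iff]
    nlinarith [hI0 x]
  have hval : ∫ x, f x ∂P ≤ (Cμ / lam ^ β) ^ N := by
    rw [hf, hP, integral_fintype_prod_eq_prod (fun (_ : Fin N) x => Real.exp (-lam * I x))]
    rw [Finset.prod_const, Finset.card_univ, Fintype.card_fin]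
    exact pow_le_pow_left₀ (integral_nonneg fun x => (Real.exp_pos _).le) (hmom lam hlam) N
  have hmarkov := mul_meas_ge_le_integral_of_nonneg
    (ae_of_all P fun x => Finset.prod_nonneg fun j _ => (Real.exp_pos (-lam * I (x j))).le)
    hint (Real.exp (-(lam * N * M)))
  have hset : {θ0 : Fin N → ℝ | (N : ℝ)⁻¹ * ∑ j, I (θ0 j) ≤ M} =
      {x | Real.exp (-(lam * N * M)) ≤ f x} := by
    ext x
    simp only [Set.mem_ofPred_eq, hf]
    rw [← Real.exp_sum, Real.exp_le_exp, ← Finset.mul_sum, inv_mul_le_iff₀ hN0,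
      neg_mul, neg_le_neg_iff, mul_assoc, mul_le_mul_iff_right₀ hlam]
  rw [hset]
  have h := mul_le_mul_of_nonneg_left (hmarkov.trans hval) (Real.exp_pos (lam * N * M)).le
  rwa [← mul_assoc, ← Real.exp_add, add_neg_cancel, Real.exp_zero, one_mul] at h

/-- The bound `chernoff` optimised over `lam`. -/
theorem chernoff_opt (N : ℕ) (hN : 1 ≤ N) (I : ℝ → ℝ) (hIc : Continuous I) (hI0 : ∀ x, 0 ≤ I x)
    (μ : Measure ℝ) [IsProbabilityMeasure μ] (Cμ β : ℝ) (hCμ : 0 < Cμ) (hβ : 0 < β)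
    (hmom : ∀ lam : ℝ, 0 < lam → ∫ x, Real.exp (-lam * I x) ∂μ ≤ Cμ / lam ^ β)
    (M : ℝ) (hM : 0 ≤ M) :
    (Measure.pi fun _ : Fin N => μ).real {θ0 | (N : ℝ)⁻¹ * ∑ j, I (θ0 j) ≤ M} ≤
      Cμ ^ N * (Real.exp 1 / β) ^ (β * N) * M ^ (β * N) := by
  have hN0 : (0 : ℝ) < N := by exact_mod_cast hN
  have h := fun lam hlam => chernoff N hN I hIc hI0 μ Cμ β hmom M lam hlam
  rcases hM.lt_or_eq with hM | rfl
  -- `lam = β / M` minimises the right-hand side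
  · refine (h (β / M) (by positivity)).trans (le_of_eq ?_)
    have h1 : β / M * N * M = β * N := by field_simp
    rw [h1, Real.div_rpow (Real.exp_pos 1).le hβ.le, ← Real.exp_mul, one_mul, div_pow,
      ← Real.rpow_natCast ((β / M) ^ β) N, ← Real.rpow_mul (by positivity),
      Real.div_rpow hβ.le hM.le]
    have : 0 < M ^ (β * N) := by positivity
    have : 0 < β ^ (β * N) := by positivity
    field_simp
  -- for `M = 0` the right-hand side tends to `0` as `lam → ∞`
  · rw [Real.zero_rpow (by positivity), mul_zero]
    simp only [mul_zero, Real.exp_zero, one_mul] at h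
    have hlim : Tendsto (fun lam : ℝ => (Cμ / lam ^ β) ^ N) atTop (nhds 0) := by
      have := ((tendsto_rpow_atTop hβ).const_div_atTop Cμ).pow N
      rwa [zero_pow (by omega)] at this
    refine ge_of_tendsto hlim ?_
    filter_upwards [eventually_gt_atTop 0] with lam hlam using h lam hlam

/-! ### Conclusion -/

theorem stmt11 (N : ℕ) (hN : 1 ≤ N) (ω : Fin N → ℝ) (κ : ℝ) (I S : ℝ → ℝ)
    (α₀ p q c₁ c₂ c₃ : ℝ)
    (hGood : GoodIS I S) (hStruct : StructC I S α₀ p q c₁ c₂ c₃)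
    (Ωn : ℝ) (hΩn : IsGreatest (Set.range fun i => |ω i|) Ωn)
    (μ : Measure ℝ) [IsProbabilityMeasure μ]
    (hμsupp : μ (Set.Icc (-Real.pi) Real.pi)ᶜ = 0)
    (Cμ β : ℝ) (hCμ : 0 < Cμ) (hβ : 0 < β)
    (hmom : ∀ lam : ℝ, 0 < lam → ∫ x, Real.exp (-lam * I x) ∂μ ≤ Cμ / lam ^ β)
    (hκ : max (2 * (2 * c₂) ^ (p/q) / (c₁ * c₃) * (Real.exp 1 / β) ^ (1 + p/q) *
          Cμ ^ ((1 + p/q) / β) * Ωn)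
        (2 * Real.exp 1 * Cμ ^ (1/β) / (c₁ * c₃ * (Real.pi - α₀) ^ p * β) * Ωn) < κ) :
    ENNReal.ofReal (1 - Cμ ^ N * (Real.exp 1 / β) ^ (β * N) *
        (max ((2 / (c₁ * c₃) * Ωn / κ) ^ (1 / (1 + p/q)) *
            (2 * c₂) ^ ((p/q) / (1 + p/q)))
          (2 / (c₁ * c₃ * (Real.pi - α₀) ^ p) * Ωn / κ)) ^ (β * N)) ≤
      (Measure.pi fun _ : Fin N => μ)
        {θ0 : Fin N → ℝ | ∃ θ : Fin N → ℝ → ℝ, IsGenWinfreeSol N ω κ I S θ0 θ ∧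
          ∀ i, OscLt2Pi (θ i)} := by
  have hI0 := infl_nonneg hGood hStruct
  have hIc : Continuous I := by
    obtain ⟨K, hK⟩ := hGood.2.2.1
    exact hK.continuous
  have hΩ : ∀ i, |ω i| ≤ Ωn := fun i => hΩn.2 ⟨i, rfl⟩
  have hΩ0 : 0 ≤ Ωn := by
    obtain ⟨i, hi⟩ := hΩn.1
    rw [← hi]
    exact abs_nonneg _
  have hα := hStruct.1
  have hc₁ : 0 < c₁ := hStruct.2.2.2.1
  have hc₂ : 0 < c₂ := hStruct.2.2.2.2.1
  have hc₃ : 0 < c₃ := hStruct.2.2.2.2.2.1.1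
  have hπα : 0 < Real.pi - α₀ := by linarith [hα.2]
  have hκ0 : 0 < κ := lt_of_le_of_lt (le_max_of_le_right (by positivity)) hκ
  set M := max ((2 / (c₁ * c₃) * Ωn / κ) ^ (1 / (1 + p/q)) * (2 * c₂) ^ ((p/q) / (1 + p/q)))
          (2 / (c₁ * c₃ * (Real.pi - α₀) ^ p) * Ωn / κ) with hM
  have hM0 : 0 ≤ M := le_max_of_le_right (by positivity)
  have hch := chernoff_opt N hN I hIc hI0 μ Cμ β hCμ hβ hmom M hM0
  set P := Measure.pi fun _ : Fin N => μ with hP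
  set A : Set (Fin N → ℝ) := {θ0 | (N : ℝ)⁻¹ * ∑ j, I (θ0 j) ≤ M} with hA
  have hAm : MeasurableSet A :=
    (isClosed_le (by fun_prop) continuous_const).measurableSet
  have hcube : ∀ᵐ x ∂P, ∀ i, x i ∈ Set.Icc (-Real.pi) Real.pi := by
    refine eventually_all.2 fun i => ?_
    have h : ∀ᵐ y ∂μ, y ∈ Set.Icc (-Real.pi) Real.pi := hμsupp
    exact (Measure.tendsto_eval_ae_ae (μ := fun _ : Fin N => μ) (i := i)).eventually h
  -- the set of good initial data need not be measurable; it contains a.e. point of the measurable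
  -- set `Aᶜ`
  calc _ ≤ ENNReal.ofReal (1 - P.real A) := ENNReal.ofReal_le_ofReal (by linarith)
    _ = P Aᶜ := by
        rw [← probReal_compl_eq_one_sub hAm, ofReal_measureReal]
    _ ≤ _ := by
        refine measure_mono_ae ?_
        filter_upwards [hcube] with θ0 hθ0 hθA
        obtain ⟨θ, hθ⟩ := exists_winfree N ω κ I S hGood θ0
        refine ⟨θ, hθ, fun i => osc_of_large_infl N hN ω κ I S α₀ p q c₁ c₂ c₃ hGood hStruct Ωn
          hΩ hκ0 θ0 hθ0 θ hθ ?_ i⟩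
        have h1 : avgInfl N I θ 0 = (N : ℝ)⁻¹ * ∑ j, I (θ0 j) := by
          rw [avgInfl]
          simp only [hθ.1]
        rw [h1]
        exact not_le.1 hθA
end
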